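/- There is an absolute constant c > 0 such that the following holds. Let k, n be positive integers with n ≥ 2, let δ, ε > 0, and let C : {-1,1}^k → {-1,1}^n be a (3, δ, ε)-normally decodable code. Then k^3 ≤ c · n · (log n)^6 / (ε^16 · δ^16). -/

import Mathlib

open Finset
open scoped Classical

noncomputable section

/-- The map sending a Boolean to the corresponding element of `{-1, 1} ⊆ ℝ`. -/
def pmo (b : Bool) : ℝ := if b then 1 else -1

/-- `H` is a `q`-uniform hypergraph matching on `[n]`: every hyperedge has exactly `q`
elements and distinct hyperedges are disjoint. -/
def IsMatching {n : ℕ} (q : ℕ) (H : Finset (Finset (Fin n))) : Prop :=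
  (∀ C ∈ H, C.card = q) ∧ Set.Pairwise (H : Set (Finset (Fin n))) Disjoint

/-- A code `Enc : {-1,1}^k → {-1,1}^n` (with `±1` vectors represented by Boolean vectors
via `pmo`) is `(q, δ, ε)`-normally decodable: for each `i ∈ [k]` there is a `q`-uniform
hypergraph matching `H i` on `[n]` with `|H i| ≥ δn` such that for every hyperedge
`C ∈ H i`, `Pr_{b uniform}[b i = ∏_{v ∈ C} Enc(b) v] ≥ 1/2 + ε`. -/
def NormallyDecodable (q k n : ℕ) (δ ε : ℝ)
    (Enc : (Fin k → Bool) → Fin n → Bool) : Prop :=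
  ∃ H : Fin k → Finset (Finset (Fin n)),
    (∀ i, IsMatching q (H i)) ∧
    (∀ i, δ * n ≤ ((H i).card : ℝ)) ∧
    (∀ i, ∀ C ∈ H i,
      (1 / 2 + ε : ℝ) ≤
        ((Finset.univ.filter (fun b : Fin k → Bool =>
          pmo (b i) = ∏ v ∈ C, pmo (Enc b v))).card : ℝ) / 2 ^ k)

/-! ### A matrix Khintchine inequality via parity walks -/

lemma pmo_mul_self (b : Bool) : pmo b * pmo b = 1 := by cases b <;> simp [pmo]

lemma abs_pmo (b : Bool) : |pmo b| = 1 := by cases b <;> simp [pmo]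

lemma sum_prod_pmo {ι : Type*} [Fintype ι] [DecidableEq ι] (O : Finset ι) :
    ∑ b : ι → Bool, ∏ i ∈ O, pmo (b i) = if O = ∅ then (2 : ℝ) ^ Fintype.card ι else 0 := by
  have h : ∀ b : ι → Bool, ∏ i ∈ O, pmo (b i) = ∏ i, (if i ∈ O then pmo (b i) else 1) := by
    intro b
    rw [Finset.prod_ite_mem, Finset.univ_inter]
  simp_rw [h]
  rw [← Fintype.prod_sum (fun i (c : Bool) => if i ∈ O then pmo c else 1)]
  split_ifs with hO
  · subst hO
    simp
  · obtain ⟨i, hi⟩ := Finset.nonempty_iff_ne_empty.mpr hO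
    refine Finset.prod_eq_zero (Finset.mem_univ i) ?_
    simp [hi, pmo]

/-- Toggling the membership of `i` in `O`. -/
def toggle {ι : Type*} [DecidableEq ι] (O : Finset ι) (i : ι) : Finset ι :=
  if i ∈ O then O.erase i else insert i O

lemma prod_toggle {ι : Type*} [DecidableEq ι] (O : Finset ι) (i : ι) (b : ι → Bool) :
    (∏ j ∈ O, pmo (b j)) * pmo (b i) = ∏ j ∈ toggle O i, pmo (b j) := by
  unfold toggle
  split_ifs with h
  · rw [← Finset.mul_prod_erase O _ h, mul_comm (pmo (b i)), mul_assoc, pmo_mul_self, mul_one]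
  · rw [Finset.prod_insert h, mul_comm]

/-- The random matrix `∑ bᵢ Bᵢ`. -/
def signedSum {ι V : Type*} [Fintype ι] (B : ι → Matrix V V ℝ) (b : ι → Bool) : Matrix V V ℝ :=
  ∑ i, pmo (b i) • B i

lemma signedSum_apply {ι V : Type*} [Fintype ι] (B : ι → Matrix V V ℝ) (b : ι → Bool) (v w : V) :
    signedSum B b v w = ∑ i, pmo (b i) * B i v w := by
  simp [signedSum, Matrix.sum_apply]

lemma sum_char_mul_pow_succ {ι V : Type*} [Fintype ι] [DecidableEq ι] [Fintype V]
    (B : ι → Matrix V V ℝ) (O : Finset ι) (r : ℕ) (v w : V) :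
    ∑ b : ι → Bool, (∏ j ∈ O, pmo (b j)) * (signedSum B b ^ (r + 1)) v w =
      ∑ i, ∑ u, B i v u *
        ∑ b : ι → Bool, (∏ j ∈ toggle O i, pmo (b j)) * (signedSum B b ^ r) u w := by
  have h : ∀ b : ι → Bool, (∏ j ∈ O, pmo (b j)) * (signedSum B b ^ (r + 1)) v w =
      ∑ i, ∑ u, B i v u * ((∏ j ∈ toggle O i, pmo (b j)) * (signedSum B b ^ r) u w) := by
    intro b
    rw [pow_succ', Matrix.mul_apply, Finset.mul_sum, Finset.sum_comm]
    refine Finset.sum_congr rfl fun u _ => ?_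
    rw [signedSum_apply, Finset.sum_mul, Finset.mul_sum]
    refine Finset.sum_congr rfl fun i _ => ?_
    rw [← prod_toggle]
    ring
  simp_rw [h]
  rw [Finset.sum_comm]
  refine Finset.sum_congr rfl fun i _ => ?_
  rw [Finset.sum_comm]
  refine Finset.sum_congr rfl fun u _ => ?_
  rw [Finset.mul_sum]

lemma sum_abs_char_mul_pow_le {ι V : Type*} [Fintype ι] [DecidableEq ι] [Fintype V]
    (B : ι → Matrix V V ℝ) (g : V → ℝ) (hg : ∀ v, 0 < g v) (θ s : ℝ) (R : ℕ)
    (hθ : 0 ≤ θ) (hs : 0 ≤ s) (hRs : R * θ ≤ s ^ 2)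
    (h1 : ∀ i v, ∑ w, |B i v w| * g w ≤ θ * g v)
    (h2 : ∀ v, ∑ i, ∑ w, |B i v w| * g w ≤ g v) (r : ℕ) :
    ∀ O : Finset ι, r + O.card ≤ R → ∀ v,
      ∑ w, |∑ b : ι → Bool, (∏ j ∈ O, pmo (b j)) * (signedSum B b ^ r) v w| * g w ≤
        2 ^ r * s ^ (r + O.card) * 2 ^ Fintype.card ι * g v := by
  induction r with
  | zero =>
    intro O _ v
    simp only [pow_zero, Matrix.one_apply, zero_add, one_mul]
    simp_rw [← Finset.sum_mul, sum_prod_pmo]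
    by_cases hO : O = ∅
    · subst hO
      simp [apply_ite abs]
    · simp only [hO, if_false, zero_mul, abs_zero, Finset.sum_const_zero]
      have := (hg v).le
      positivity
  | succ r ih =>
    intro O hO v
    set K : ℝ := 2 ^ Fintype.card ι
    have hK : 0 ≤ K := by positivity
    set F : Finset ι → V → V → ℝ := fun O u w =>
      ∑ b : ι → Bool, (∏ j ∈ O, pmo (b j)) * (signedSum B b ^ r) u w with hF
    have step : ∑ w, |∑ b : ι → Bool, (∏ j ∈ O, pmo (b j)) * (signedSum B b ^ (r + 1)) v w| * g w
        ≤ ∑ i, ∑ u, |B i v u| * ∑ w, |F (toggle O i) u w| * g w := by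
      simp_rw [sum_char_mul_pow_succ]
      have e : ∑ i, ∑ u, |B i v u| * ∑ w, |F (toggle O i) u w| * g w
          = ∑ w, ∑ i, ∑ u, |B i v u| * (|F (toggle O i) u w| * g w) := by
        simp_rw [Finset.mul_sum]
        rw [Finset.sum_comm (s := (Finset.univ : Finset V)) (t := (Finset.univ : Finset ι))]
        exact Finset.sum_congr rfl fun i _ => Finset.sum_comm
      rw [e]
      refine Finset.sum_le_sum fun w _ => ?_
      simp_rw [← mul_assoc, ← Finset.sum_mul]
      refine mul_le_mul_of_nonneg_right ?_ (hg w).le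
      refine (Finset.abs_sum_le_sum_abs _ _).trans (Finset.sum_le_sum fun i _ => ?_)
      refine (Finset.abs_sum_le_sum_abs _ _).trans (Finset.sum_le_sum fun u _ => ?_)
      rw [abs_mul]
    refine step.trans ?_
    set c : ℝ := 2 ^ r * s ^ (r + 1 + O.card) * K with hc
    have hc0 : 0 ≤ c := by positivity
    have hin : ∀ i ∈ O, ∑ u, |B i v u| * ∑ w, |F (toggle O i) u w| * g w ≤
        2 ^ r * s ^ (r + (O.card - 1)) * K * (θ * g v) := by
      intro i hi
      have ht : (toggle O i).card = O.card - 1 := by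
        simp [toggle, hi, Finset.card_erase_of_mem]
      calc ∑ u, |B i v u| * ∑ w, |F (toggle O i) u w| * g w
          ≤ ∑ u, |B i v u| * (2 ^ r * s ^ (r + (toggle O i).card) * K * g u) :=
            Finset.sum_le_sum fun u _ => mul_le_mul_of_nonneg_left
              (ih (toggle O i) (by omega) u) (abs_nonneg _)
        _ = 2 ^ r * s ^ (r + (O.card - 1)) * K * ∑ u, |B i v u| * g u := by
            rw [ht, Finset.mul_sum]
            exact Finset.sum_congr rfl fun u _ => by ring
        _ ≤ _ := mul_le_mul_of_nonneg_left (h1 i v) (by positivity)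
    have hout : ∀ i ∉ O, ∑ u, |B i v u| * ∑ w, |F (toggle O i) u w| * g w ≤
        c * ∑ u, |B i v u| * g u := by
      intro i hi
      have ht : (toggle O i).card = O.card + 1 := by
        simp [toggle, hi]
      calc ∑ u, |B i v u| * ∑ w, |F (toggle O i) u w| * g w
          ≤ ∑ u, |B i v u| * (2 ^ r * s ^ (r + (toggle O i).card) * K * g u) :=
            Finset.sum_le_sum fun u _ => mul_le_mul_of_nonneg_left
              (ih (toggle O i) (by omega) u) (abs_nonneg _)
        _ = c * ∑ u, |B i v u| * g u := by
            rw [ht, Finset.mul_sum, hc, show r + (O.card + 1) = r + 1 + O.card by ring]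
            exact Finset.sum_congr rfl fun u _ => by ring
    rw [← Finset.sum_add_sum_compl O]
    have hA : ∑ i ∈ O, ∑ u, |B i v u| * ∑ w, |F (toggle O i) u w| * g w ≤ c * g v := by
      refine (Finset.sum_le_sum hin).trans ?_
      rw [Finset.sum_const, nsmul_eq_mul]
      rcases Nat.eq_zero_or_pos O.card with h0 | hpos
      · rw [h0]
        have := (hg v).le
        simp only [Nat.cast_zero, zero_mul]
        positivity
      · obtain ⟨m, hm⟩ : ∃ m, O.card = m + 1 := ⟨O.card - 1, by omega⟩
        have hle : (O.card : ℝ) * θ ≤ s ^ 2 := by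
          refine le_trans (mul_le_mul_of_nonneg_right ?_ hθ) hRs
          exact_mod_cast (by omega : O.card ≤ R)
        have e1 : (O.card : ℝ) * (2 ^ r * s ^ (r + (O.card - 1)) * K * (θ * g v)) =
            (O.card * θ) * (2 ^ r * s ^ (r + (O.card - 1)) * K * g v) := by ring
        have e2 : c * g v = s ^ 2 * (2 ^ r * s ^ (r + (O.card - 1)) * K * g v) := by
          rw [hc, hm, Nat.add_sub_cancel]
          ring
        rw [e1, e2]
        have := (hg v).le
        exact mul_le_mul_of_nonneg_right hle (by positivity)
    have hB : ∑ i ∈ Oᶜ, ∑ u, |B i v u| * ∑ w, |F (toggle O i) u w| * g w ≤ c * g v := by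
      refine (Finset.sum_le_sum fun i hi => hout i (Finset.mem_compl.mp hi)).trans ?_
      rw [← Finset.mul_sum]
      refine mul_le_mul_of_nonneg_left (le_trans ?_ (h2 v)) hc0
      refine Finset.sum_le_sum_of_subset_of_nonneg (Finset.subset_univ _) fun i _ _ => ?_
      exact Finset.sum_nonneg fun w _ => mul_nonneg (abs_nonneg _) (hg w).le
    calc _ ≤ c * g v + c * g v := add_le_add hA hB
      _ = _ := by rw [hc]; ring

lemma quadForm_pow_le_trace {V : Type*} [Fintype V] (y : V → ℝ) (G : ℝ)
    (hy : ∑ v, y v ^ 2 ≤ G) (t : ℕ) :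
    ∀ B : Matrix V V ℝ, B.IsSymm →
      (∑ v, ∑ w, B v w * y v * y w) ^ (2 ^ (t + 1)) ≤
        G ^ (2 ^ (t + 1)) * (B ^ (2 ^ (t + 1))).trace := by
  have hy0 : 0 ≤ ∑ v, y v ^ 2 := Finset.sum_nonneg fun v _ => sq_nonneg _
  have hG : 0 ≤ G := hy0.trans hy
  have key : ∀ B : Matrix V V ℝ, (∑ v, ∑ w, B v w * y v * y w) ^ 2 ≤
      G * ∑ v, (∑ w, B v w * y w) ^ 2 := by
    intro B
    have e : ∑ v, ∑ w, B v w * y v * y w = ∑ v, y v * ∑ w, B v w * y w := by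
      refine Finset.sum_congr rfl fun v _ => ?_
      rw [Finset.mul_sum]
      exact Finset.sum_congr rfl fun w _ => by ring
    rw [e]
    exact (Finset.sum_mul_sq_le_sq_mul_sq _ _ _).trans
      (mul_le_mul_of_nonneg_right hy (Finset.sum_nonneg fun v _ => sq_nonneg _))
  induction t with
  | zero =>
    intro B hB
    have htr : (B ^ (2 ^ (0 + 1))).trace = ∑ v, ∑ w, B v w ^ 2 := by
      simp only [zero_add, pow_one, pow_two, Matrix.trace, Matrix.diag_apply, Matrix.mul_apply]
      refine Finset.sum_congr rfl fun v _ => Finset.sum_congr rfl fun w _ => ?_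
      rw [hB.apply v w]
    rw [htr, zero_add, pow_one, pow_two G, mul_assoc]
    refine (key B).trans (mul_le_mul_of_nonneg_left ?_ hG)
    rw [Finset.mul_sum]
    refine Finset.sum_le_sum fun v _ => ?_
    refine (Finset.sum_mul_sq_le_sq_mul_sq _ _ _).trans ?_
    rw [mul_comm]
    exact mul_le_mul_of_nonneg_right hy (Finset.sum_nonneg fun w _ => sq_nonneg _)
  | succ t ih =>
    intro B hB
    have hq : ∑ v, (∑ w, B v w * y w) ^ 2 = ∑ v, ∑ w, (B * B) v w * y v * y w := by
      simp_rw [Matrix.mul_apply, pow_two, Finset.sum_mul_sum, Finset.sum_mul]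
      rw [Finset.sum_comm]
      refine Finset.sum_congr rfl fun v _ => ?_
      rw [Finset.sum_comm]
      refine Finset.sum_congr rfl fun w _ => Finset.sum_congr rfl fun u _ => ?_
      rw [hB.apply v u]
      ring
    have hBB : (B * B).IsSymm := by
      rw [Matrix.IsSymm, Matrix.transpose_mul, hB.eq]
    have h := ih (B * B) hBB
    have e2 : 2 ^ (t + 1 + 1) = 2 * 2 ^ (t + 1) := by ring
    rw [e2, pow_mul, pow_mul, pow_mul, pow_two B]
    calc _ ≤ (G * ∑ v, (∑ w, B v w * y w) ^ 2) ^ 2 ^ (t + 1) :=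
          pow_le_pow_left₀ (sq_nonneg _) (key B) _
      _ = G ^ 2 ^ (t + 1) * (∑ v, ∑ w, (B * B) v w * y v * y w) ^ 2 ^ (t + 1) := by
          rw [mul_pow, hq]
      _ ≤ G ^ 2 ^ (t + 1) * (G ^ 2 ^ (t + 1) * ((B * B) ^ 2 ^ (t + 1)).trace) :=
          mul_le_mul_of_nonneg_left h (by positivity)
      _ = _ := by rw [pow_two, mul_pow]; ring

/-- Averaged over signs, a signed sum of symmetric matrices has small quadratic forms on
`[-1,1]`-vectors, even when the vector depends on the signs. -/
theorem sum_signed_quadForm_le {ι V : Type*} [Fintype ι] [DecidableEq ι] [Fintype V]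
    (A : ι → V → V → ℝ) (hA : ∀ i v w, A i v w = A i w v) (Γ : V → ℝ) (hΓ : ∀ v, 0 < Γ v)
    (θ s : ℝ) (t : ℕ) (hθ : 0 ≤ θ) (hs : 0 ≤ s) (hRs : (2 : ℝ) ^ (t + 1) * θ ≤ s ^ 2)
    (hcard : (Fintype.card V : ℝ) ≤ 2 ^ (2 ^ (t + 1)))
    (h1 : ∀ i v, ∑ w, |A i v w| ≤ θ * Γ v) (h2 : ∀ v, ∑ i, ∑ w, |A i v w| ≤ Γ v)
    (z : (ι → Bool) → V → ℝ) (hz : ∀ b v, |z b v| ≤ 1) :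
    ∑ b : ι → Bool, ∑ i, pmo (b i) * ∑ v, ∑ w, A i v w * z b v * z b w ≤
      4 * s * (∑ v, Γ v) * 2 ^ Fintype.card ι := by
  set R : ℕ := 2 ^ (t + 1) with hR
  set K : ℝ := 2 ^ Fintype.card ι with hKdef
  have hK : 0 < K := by positivity
  set G : ℝ := ∑ v, Γ v with hGdef
  have hG : 0 ≤ G := Finset.sum_nonneg fun v _ => (hΓ v).le
  set g : V → ℝ := fun v => √(Γ v) with hgdef
  have hg : ∀ v, 0 < g v := fun v => Real.sqrt_pos.mpr (hΓ v)
  have hgg : ∀ v, g v * g v = Γ v := fun v => Real.mul_self_sqrt (hΓ v).le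
  set B : ι → Matrix V V ℝ := fun i => Matrix.of fun v w => A i v w / (g v * g w) with hBdef
  have hBrow : ∀ i v, ∑ w, |B i v w| * g w = (∑ w, |A i v w|) / g v := by
    intro i v
    rw [Finset.sum_div]
    refine Finset.sum_congr rfl fun w _ => ?_
    have h3 := (hg v).ne'
    have h4 := (hg w).ne'
    simp only [hBdef, Matrix.of_apply, abs_div, abs_mul, abs_of_pos (hg v), abs_of_pos (hg w)]
    field_simp
  have hB1 : ∀ i v, ∑ w, |B i v w| * g w ≤ θ * g v := by
    intro i v
    rw [hBrow, div_le_iff₀ (hg v), mul_assoc, hgg]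
    exact h1 i v
  have hB2 : ∀ v, ∑ i, ∑ w, |B i v w| * g w ≤ g v := by
    intro v
    simp_rw [hBrow]
    rw [← Finset.sum_div, div_le_iff₀ (hg v), hgg]
    exact h2 v
  have hsymm : ∀ b, (signedSum B b).IsSymm := by
    intro b
    ext v w
    simp only [Matrix.transpose_apply, signedSum_apply, hBdef, Matrix.of_apply]
    refine Finset.sum_congr rfl fun i _ => ?_
    rw [hA i w v, mul_comm (g w)]
  set q : (ι → Bool) → ℝ := fun b => ∑ i, pmo (b i) * ∑ v, ∑ w, A i v w * z b v * z b w with hq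
  have hqB : ∀ b, q b = ∑ v, ∑ w, signedSum B b v w * (g v * z b v) * (g w * z b w) := by
    intro b
    simp only [hq, signedSum_apply, hBdef, Matrix.of_apply, Finset.sum_mul, Finset.mul_sum]
    rw [Finset.sum_comm]
    refine Finset.sum_congr rfl fun v _ => ?_
    rw [Finset.sum_comm]
    refine Finset.sum_congr rfl fun w _ => Finset.sum_congr rfl fun i _ => ?_
    have h3 := (hg v).ne'
    have h4 := (hg w).ne'
    field_simp
  have hnorm : ∀ b, ∑ v, (g v * z b v) ^ 2 ≤ G := by
    intro b
    refine Finset.sum_le_sum fun v _ => ?_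
    have : z b v ^ 2 ≤ 1 := by
      rw [← sq_abs]
      exact pow_le_one₀ (abs_nonneg _) (hz b v)
    rw [mul_pow, pow_two (g v), hgg]
    exact mul_le_of_le_one_right (hΓ v).le this
  have hqR : ∀ b, q b ^ R ≤ G ^ R * (signedSum B b ^ R).trace := by
    intro b
    rw [hqB]
    exact quadForm_pow_le_trace _ G (hnorm b) t _ (hsymm b)
  have htrace : ∑ b, (signedSum B b ^ R).trace ≤ (4 * s) ^ R * K := by
    have hv : ∀ v, ∑ b, (signedSum B b ^ R) v v ≤ (2 * s) ^ R * K := by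
      intro v
      have h := sum_abs_char_mul_pow_le B g hg θ s R hθ hs (by rw [hR]; push_cast; exact hRs)
        hB1 hB2 R ∅ (by simp) v
      simp only [Finset.prod_empty, one_mul, Finset.card_empty, add_zero] at h
      have h3 : |∑ b, (signedSum B b ^ R) v v| * g v ≤ 2 ^ R * s ^ R * K * g v :=
        le_trans (Finset.single_le_sum
          (f := fun w => |∑ b, (signedSum B b ^ R) v w| * g w)
          (fun w _ => mul_nonneg (abs_nonneg _) (hg w).le) (Finset.mem_univ v)) h
      rw [mul_pow]
      exact (le_abs_self _).trans (le_of_mul_le_mul_right h3 (hg v))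
    simp only [Matrix.trace, Matrix.diag_apply]
    rw [Finset.sum_comm]
    refine (Finset.sum_le_sum fun v _ => hv v).trans ?_
    rw [Finset.sum_const, nsmul_eq_mul, Finset.card_univ, ← mul_assoc]
    refine mul_le_mul_of_nonneg_right ?_ hK.le
    rw [show (4 * s) = 2 * (2 * s) by ring, mul_pow 2 (2 * s)]
    exact mul_le_mul_of_nonneg_right hcard (by positivity)
  have hReven : Even R := by
    rw [hR, pow_succ]
    exact even_two.mul_left _
  have hR1 : R = R - 1 + 1 := by
    have : 0 < R := by positivity
    omega
  have hjensen : (∑ b, q b) ^ R ≤ K ^ (R - 1) * ∑ b, q b ^ R := by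
    have h := pow_sum_le_card_mul_sum_pow (s := (Finset.univ : Finset (ι → Bool)))
      (f := fun b => |q b|) (fun b _ => abs_nonneg _) (R - 1)
    rw [← hR1] at h
    simp only [hReven.pow_abs] at h
    have hcard' : ((Finset.univ : Finset (ι → Bool)).card : ℝ) = K := by
      simp [hKdef]
    rw [hcard'] at h
    refine le_trans ?_ h
    rw [← hReven.pow_abs]
    exact pow_le_pow_left₀ (abs_nonneg _) (Finset.abs_sum_le_sum_abs _ _) _
  have hfin : (∑ b, q b) ^ R ≤ (4 * s * G * K) ^ R := by
    calc (∑ b, q b) ^ R ≤ K ^ (R - 1) * ∑ b, q b ^ R := hjensen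
      _ ≤ K ^ (R - 1) * (G ^ R * ((4 * s) ^ R * K)) := by
          refine mul_le_mul_of_nonneg_left ?_ (by positivity)
          refine (Finset.sum_le_sum fun b _ => hqR b).trans ?_
          rw [← Finset.mul_sum]
          exact mul_le_mul_of_nonneg_left htrace (by positivity)
      _ = (4 * s * G) ^ R * (K ^ (R - 1) * K) := by rw [mul_pow (4 * s) G]; ring
      _ = _ := by rw [← pow_succ, ← hR1, ← mul_pow]
  by_contra hlt
  exact absurd hfin (not_le.mpr (pow_lt_pow_left₀ (not_le.mp hlt) (by positivity) (by omega)))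

/-! ### Triples through a heavy pair -/

lemma sum_subtype_of_support {β : Type*} [Fintype β] (P : β → Prop) (f : β → ℝ)
    (hf : ∀ p, ¬ P p → f p = 0) : ∑ p : {p // P p}, f p = ∑ p, f p := by
  rw [← Finset.sum_subtype (Finset.univ.filter P) (by simp) f]
  refine Finset.sum_subset (Finset.subset_univ _) fun p _ hp => hf p ?_
  simpa using hp

/-- The signed sum over triples whose last two coordinates form a heavy pair is small. -/
theorem sum_heavy_le {k n : ℕ} (g : Fin k → Fin n → Fin n → Fin n → ℝ)
    (hg : ∀ i u v w, 0 ≤ g i u v w)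
    (hu : ∀ i u, ∑ v, ∑ w, g i u v w ≤ 1) (hvw : ∀ i v w, ∑ u, g i u v w ≤ 1)
    (D : Fin n → Fin n → ℝ) (hD0 : ∀ v w, 0 ≤ D v w) (hD : ∀ v w, ∑ i, ∑ u, g i u v w ≤ D v w)
    (hDsum : ∑ v, ∑ w, D v w ≤ n * k) (d : ℝ) (hd : 0 < d) (hdk : d ≤ k)
    (hsupp : ∀ i u v w, ¬ d < D v w → g i u v w = 0)
    (t : ℕ) (hcard : (n : ℝ) + n ^ 2 ≤ 2 ^ (2 ^ (t + 1)))
    (s : ℝ) (hs : 0 ≤ s) (hst : (2 : ℝ) ^ (t + 1) / d ≤ s ^ 2)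
    (x : (Fin k → Bool) → Fin n → ℝ) (hx : ∀ b v, |x b v| ≤ 1) :
    ∑ b : Fin k → Bool, ∑ i, pmo (b i) * ∑ u, ∑ v, ∑ w, g i u v w * x b u * x b v * x b w ≤
      4 * s * (n * k) * 2 ^ k := by
  set P : Fin n × Fin n → Prop := fun p => d < D p.1 p.2 with hP
  set A : Fin k → (Fin n ⊕ {p // P p}) → (Fin n ⊕ {p // P p}) → ℝ := fun i =>
    Sum.elim (fun u => Sum.elim (fun _ => 0) (fun p => g i u p.1.1 p.1.2))
      (fun p => Sum.elim (fun u => g i u p.1.1 p.1.2) (fun _ => 0)) with hA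
  set Γ : (Fin n ⊕ {p // P p}) → ℝ := Sum.elim (fun _ => (k : ℝ)) (fun p => D p.1.1 p.1.2) with hΓ
  have hk : (0 : ℝ) < k := hd.trans_le hdk
  have hpair : ∀ i u, ∑ p : {p // P p}, g i u p.1.1 p.1.2 = ∑ v, ∑ w, g i u v w := by
    intro i u
    rw [sum_subtype_of_support P (fun p => g i u p.1 p.2) fun p hp => hsupp i u p.1 p.2 hp,
      Fintype.sum_prod_type]
  have hrow : ∀ i v, ∑ w, |A i v w| =
      Sum.elim (fun u => ∑ v, ∑ w, g i u v w) (fun p => ∑ u, g i u p.1.1 p.1.2) v := by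
    rintro i (u | p)
    · simp [hA, Fintype.sum_sum_type, abs_of_nonneg (hg _ _ _ _), hpair]
    · simp [hA, Fintype.sum_sum_type, abs_of_nonneg (hg _ _ _ _)]
  have hΓsum : ∑ v, Γ v ≤ 2 * (n * k) := by
    rw [Fintype.sum_sum_type]
    simp only [hΓ, Sum.elim_inl, Sum.elim_inr, Finset.sum_const, Finset.card_univ,
      Fintype.card_fin, nsmul_eq_mul]
    have : ∑ p : {p // P p}, D p.1.1 p.1.2 ≤ ∑ v, ∑ w, D v w := by
      rw [← Fintype.sum_prod_type',
        ← Finset.sum_subtype (Finset.univ.filter P) (by simp) (fun p => D p.1 p.2)]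
      exact Finset.sum_le_sum_of_subset_of_nonneg (Finset.subset_univ _) fun p _ _ => hD0 _ _
    linarith
  have hmain := sum_signed_quadForm_le A
    (by rintro i (u | p) (u' | p') <;> simp [hA]) Γ
    (by
      rintro (u | p)
      · exact hk
      · exact hd.trans p.2)
    (1 / d) s t (by positivity) hs (by rwa [mul_one_div])
    (by
      refine le_trans ?_ hcard
      rw [Fintype.card_sum, Fintype.card_fin]
      push_cast
      have h := Fintype.card_subtype_le P
      rw [Fintype.card_prod, Fintype.card_fin] at h
      have h' : (Fintype.card {p // P p} : ℝ) ≤ n * n := by exact_mod_cast h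
      nlinarith)
    (by
      intro i v
      rw [hrow, one_div_mul_eq_div, le_div_iff₀ hd]
      rcases v with u | p
      · simp only [Sum.elim_inl, hΓ]
        nlinarith [hu i u]
      · simp only [Sum.elim_inr, hΓ]
        have := p.2
        simp only [hP] at this
        nlinarith [hvw i p.1.1 p.1.2])
    (by
      intro v
      simp_rw [hrow]
      rcases v with u | p
      · simp only [Sum.elim_inl, hΓ]
        refine (Finset.sum_le_sum fun i _ => hu i u).trans ?_
        simp
      · simp only [Sum.elim_inr, hΓ]
        exact hD _ _)
    (fun b => Sum.elim (fun u => x b u) (fun p => x b p.1.1 * x b p.1.2))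
    (by
      rintro b (u | p)
      · exact hx b u
      · simp only [Sum.elim_inr, abs_mul]
        exact mul_le_one₀ (hx _ _) (abs_nonneg _) (hx _ _))
  have hform : ∀ (b : Fin k → Bool) (i : Fin k), ∑ v, ∑ w, A i v w *
      (Sum.elim (fun u => x b u) (fun p => x b p.1.1 * x b p.1.2) : Fin n ⊕ {p // P p} → ℝ) v *
      (Sum.elim (fun u => x b u) (fun p => x b p.1.1 * x b p.1.2) : Fin n ⊕ {p // P p} → ℝ) w =
      2 * ∑ u, ∑ v, ∑ w, g i u v w * x b u * x b v * x b w := by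
    intro b i
    have e : ∀ u, ∑ p : {p // P p}, g i u p.1.1 p.1.2 * x b u * (x b p.1.1 * x b p.1.2) =
        ∑ v, ∑ w, g i u v w * x b u * x b v * x b w := by
      intro u
      rw [sum_subtype_of_support P (fun p => g i u p.1 p.2 * x b u * (x b p.1 * x b p.2))
        (fun p hp => by simp [hsupp i u p.1 p.2 hp]), Fintype.sum_prod_type]
      exact Finset.sum_congr rfl fun v _ => Finset.sum_congr rfl fun w _ => by ring
    have e' : ∑ p : {p // P p}, ∑ u, g i u p.1.1 p.1.2 * (x b p.1.1 * x b p.1.2) * x b u =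
        ∑ u, ∑ v, ∑ w, g i u v w * x b u * x b v * x b w := by
      rw [Finset.sum_comm]
      refine Finset.sum_congr rfl fun u _ => ?_
      rw [← e]
      exact Finset.sum_congr rfl fun p _ => by ring
    simp only [Fintype.sum_sum_type, hA, Sum.elim_inl, Sum.elim_inr, zero_mul,
      Finset.sum_const_zero, zero_add, add_zero]
    rw [e', Finset.sum_congr rfl fun u _ => e u]
    ring
  simp_rw [hform] at hmain
  have h2 : ∑ b : Fin k → Bool, ∑ i, pmo (b i) *
      (2 * ∑ u, ∑ v, ∑ w, g i u v w * x b u * x b v * x b w) =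
      2 * ∑ b : Fin k → Bool, ∑ i, pmo (b i) *
        ∑ u, ∑ v, ∑ w, g i u v w * x b u * x b v * x b w := by
    rw [Finset.mul_sum]
    refine Finset.sum_congr rfl fun b _ => ?_
    rw [Finset.mul_sum]
    exact Finset.sum_congr rfl fun i _ => by ring
  rw [h2, Fintype.card_fin] at hmain
  have h3 : 4 * s * (∑ v, Γ v) * 2 ^ k ≤ 4 * s * (2 * (n * k)) * 2 ^ k := by gcongr
  linarith

/-! ### Kikuchi matrices on pairs of tuples -/

/-- The tuples `S` and `T` agree away from coordinate `a`. -/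
def AgreeOff {n ℓ : ℕ} (S T : Fin ℓ → Fin n) (a : Fin ℓ) : Prop := ∀ a', a' ≠ a → S a' = T a'

lemma AgreeOff.comm {n ℓ : ℕ} {S T : Fin ℓ → Fin n} {a : Fin ℓ} :
    AgreeOff S T a ↔ AgreeOff T S a :=
  ⟨fun h a' ha => (h a' ha).symm, fun h a' ha => (h a' ha).symm⟩

lemma sum_agreeOff {n ℓ : ℕ} (S : Fin ℓ → Fin n) (a : Fin ℓ) (F : (Fin ℓ → Fin n) → ℝ) :
    ∑ T, (if AgreeOff S T a then F T else 0) = ∑ y, F (Function.update S a y) := by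
  rw [← Finset.sum_filter]
  symm
  refine Finset.sum_bij' (fun y _ => Function.update S a y) (fun T _ => T a) ?_ ?_ ?_ ?_ ?_
  · intro y _
    simp only [Finset.mem_filter, Finset.mem_univ, true_and]
    intro a' ha
    simp [ha]
  · simp
  · simp
  · intro T hT
    simp only [Finset.mem_filter, Finset.mem_univ, true_and] at hT
    ext a'
    by_cases h : a' = a
    · subst h; simp
    · simp [h, hT a' h]
  · simp

/-- Resampling one coordinate of a uniform tuple leaves it uniform. -/
lemma sum_resample {n ℓ : ℕ} (a : Fin ℓ) (F : (Fin ℓ → Fin n) → ℝ) :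
    n * ∑ S, F S = ∑ S, ∑ y, F (Function.update S a y) := by
  have h1 : (n : ℝ) * ∑ S, F S = ∑ p : (Fin ℓ → Fin n) × Fin n, F p.1 := by
    rw [Fintype.sum_prod_type]
    simp [Finset.mul_sum]
  rw [h1, ← Fintype.sum_prod_type' (fun S y => F (Function.update S a y))]
  refine Finset.sum_bij' (fun p _ => (Function.update p.1 a p.2, p.1 a))
    (fun p _ => (Function.update p.1 a p.2, p.1 a)) ?_ ?_ ?_ ?_ ?_ <;> simp

lemma sum_apply_coord {n ℓ : ℕ} (a : Fin ℓ) (f : Fin n → ℝ) :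
    n * ∑ S : Fin ℓ → Fin n, f (S a) = n ^ ℓ * ∑ v, f v := by
  rw [sum_resample a]
  simp

/-- The matrix on pairs of tuples acting by the kernel `K` on one coordinate of each tuple. -/
def kikuchi {n : ℕ} (ℓ : ℕ) (K : Fin n → Fin n → Fin n → Fin n → ℝ)
    (X Y : (Fin ℓ → Fin n) × (Fin ℓ → Fin n)) : ℝ :=
  ∑ p : Fin ℓ × Fin ℓ, if AgreeOff X.1 Y.1 p.1 then
    (if AgreeOff X.2 Y.2 p.2 then K (X.1 p.1) (Y.1 p.1) (X.2 p.2) (Y.2 p.2) else 0) else 0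

/-- The sum of `c` over all pairs of coordinates. -/
def pairSum {n ℓ : ℕ} (c : Fin n → Fin n → ℝ) (X : (Fin ℓ → Fin n) × (Fin ℓ → Fin n)) : ℝ :=
  ∑ p : Fin ℓ × Fin ℓ, c (X.1 p.1) (X.2 p.2)

section Kikuchi

variable {n ℓ : ℕ}

lemma kikuchi_symm (K : Fin n → Fin n → Fin n → Fin n → ℝ)
    (hK : ∀ v v' w w', K v v' w w' = K v' v w' w) (X Y : (Fin ℓ → Fin n) × (Fin ℓ → Fin n)) :
    kikuchi ℓ K X Y = kikuchi ℓ K Y X := by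
  unfold kikuchi
  refine Finset.sum_congr rfl fun p _ => ?_
  rw [hK, AgreeOff.comm (S := X.1), AgreeOff.comm (S := X.2)]

lemma abs_kikuchi_le (K K' : Fin n → Fin n → Fin n → Fin n → ℝ)
    (hK : ∀ v v' w w', |K v v' w w'| ≤ K' v v' w w') (X Y : (Fin ℓ → Fin n) × (Fin ℓ → Fin n)) :
    |kikuchi ℓ K X Y| ≤ kikuchi ℓ K' X Y := by
  unfold kikuchi
  refine (Finset.abs_sum_le_sum_abs _ _).trans (Finset.sum_le_sum fun p _ => ?_)
  split_ifs
  · exact hK _ _ _ _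
  · simp
  · simp

lemma sum_kikuchi_mul (K : Fin n → Fin n → Fin n → Fin n → ℝ)
    (X : (Fin ℓ → Fin n) × (Fin ℓ → Fin n)) (F : (Fin ℓ → Fin n) × (Fin ℓ → Fin n) → ℝ) :
    ∑ Y, kikuchi ℓ K X Y * F Y = ∑ p : Fin ℓ × Fin ℓ, ∑ v', ∑ w',
      K (X.1 p.1) v' (X.2 p.2) w' *
        F (Function.update X.1 p.1 v', Function.update X.2 p.2 w') := by
  unfold kikuchi
  simp_rw [Finset.sum_mul]
  rw [Finset.sum_comm]
  refine Finset.sum_congr rfl fun p _ => ?_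
  rw [Fintype.sum_prod_type]
  simp only [ite_mul, zero_mul]
  have h : ∀ T : Fin ℓ → Fin n, ∑ T' : Fin ℓ → Fin n, (if AgreeOff X.1 T p.1 then
      (if AgreeOff X.2 T' p.2 then K (X.1 p.1) (T p.1) (X.2 p.2) (T' p.2) * F (T, T') else 0)
        else 0) = if AgreeOff X.1 T p.1 then ∑ w', K (X.1 p.1) (T p.1) (X.2 p.2) w' *
          F (T, Function.update X.2 p.2 w') else 0 := by
    intro T
    split_ifs
    · rw [sum_agreeOff X.2 p.2 (fun T' => K (X.1 p.1) (T p.1) (X.2 p.2) (T' p.2) * F (T, T'))]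
      simp
    · simp
  simp_rw [h]
  rw [sum_agreeOff X.1 p.1 (fun T => ∑ w', K (X.1 p.1) (T p.1) (X.2 p.2) w' *
          F (T, Function.update X.2 p.2 w'))]
  simp

lemma sum_kikuchi (K : Fin n → Fin n → Fin n → Fin n → ℝ)
    (X : (Fin ℓ → Fin n) × (Fin ℓ → Fin n)) :
    ∑ Y, kikuchi ℓ K X Y = pairSum (fun v w => ∑ v', ∑ w', K v v' w w') X := by
  have := sum_kikuchi_mul K X (fun _ => 1)
  simpa [pairSum] using this

lemma sum_pairSum (c : Fin n → Fin n → ℝ) :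
    (n : ℝ) ^ 2 * ∑ X : (Fin ℓ → Fin n) × (Fin ℓ → Fin n), pairSum c X =
      ((n : ℝ) ^ ℓ) ^ 2 * ℓ ^ 2 * ∑ v, ∑ w, c v w := by
  unfold pairSum
  rw [Finset.sum_comm, Finset.mul_sum]
  have h : ∀ p : Fin ℓ × Fin ℓ, (n : ℝ) ^ 2 * ∑ X : (Fin ℓ → Fin n) × (Fin ℓ → Fin n),
      c (X.1 p.1) (X.2 p.2) = ((n : ℝ) ^ ℓ) ^ 2 * ∑ v, ∑ w, c v w := by
    intro p
    rw [Fintype.sum_prod_type]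
    calc (n : ℝ) ^ 2 * ∑ S : Fin ℓ → Fin n, ∑ S' : Fin ℓ → Fin n, c (S p.1) (S' p.2)
        = n * ∑ S : Fin ℓ → Fin n, n * ∑ S' : Fin ℓ → Fin n, c (S p.1) (S' p.2) := by
          rw [← Finset.mul_sum]; ring
      _ = n ^ ℓ * (n * ∑ S : Fin ℓ → Fin n, ∑ w, c (S p.1) w) := by
          simp_rw [sum_apply_coord]
          rw [← Finset.mul_sum]; ring
      _ = _ := by
          rw [sum_apply_coord p.1 (fun v => ∑ w, c v w)]; ring
  simp_rw [h]
  rw [Finset.sum_const, Finset.card_univ, Fintype.card_prod, Fintype.card_fin, nsmul_eq_mul]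
  push_cast
  ring

lemma sum_sq_pairSum_le (hn : 0 < n) (c : Fin n → Fin n → ℝ) (hc : ∀ v w, 0 ≤ c v w) (d κ : ℝ)
    (hd : ∀ v w, c v w ≤ d) (h1 : ∀ w, ∑ v, c v w ≤ κ) (h2 : ∀ v, ∑ w, c v w ≤ κ) :
    ∑ X : (Fin ℓ → Fin n) × (Fin ℓ → Fin n), pairSum c X ^ 2 ≤
      (d + (ℓ ^ 2 - 1) * (κ / n)) * ∑ X : (Fin ℓ → Fin n) × (Fin ℓ → Fin n), pairSum c X := by
  have hn' : (0 : ℝ) < n := by exact_mod_cast hn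
  have key : ∀ p p' : Fin ℓ × Fin ℓ, ∑ X : (Fin ℓ → Fin n) × (Fin ℓ → Fin n),
      c (X.1 p.1) (X.2 p.2) * c (X.1 p'.1) (X.2 p'.2) ≤ (if p' = p then d else κ / n) *
        ∑ X : (Fin ℓ → Fin n) × (Fin ℓ → Fin n), c (X.1 p.1) (X.2 p.2) := by
    intro p p'
    split_ifs with h
    · subst h
      rw [Finset.mul_sum]
      exact Finset.sum_le_sum fun X _ => mul_le_mul_of_nonneg_right (hd _ _) (hc _ _)
    · rw [div_mul_eq_mul_div, le_div_iff₀ hn', mul_comm _ (n : ℝ)]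
      by_cases ha : p'.1 = p.1
      · have hb : p.2 ≠ p'.2 := fun hb => h (Prod.ext ha hb.symm)
        rw [Fintype.sum_prod_type, Fintype.sum_prod_type, Finset.mul_sum, Finset.mul_sum]
        refine Finset.sum_le_sum fun S _ => ?_
        rw [sum_resample p'.2, Finset.mul_sum]
        refine Finset.sum_le_sum fun S' _ => ?_
        simp only [Function.update_of_ne hb, Function.update_self]
        rw [← Finset.mul_sum, mul_comm]
        exact mul_le_mul_of_nonneg_right (h2 _) (hc _ _)
      · have ha' : p.1 ≠ p'.1 := fun h => ha h.symm
        rw [Fintype.sum_prod_type_right, Fintype.sum_prod_type_right, Finset.mul_sum,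
          Finset.mul_sum]
        refine Finset.sum_le_sum fun S' _ => ?_
        rw [sum_resample p'.1, Finset.mul_sum]
        refine Finset.sum_le_sum fun S _ => ?_
        simp only [Function.update_of_ne ha', Function.update_self]
        rw [← Finset.mul_sum, mul_comm]
        exact mul_le_mul_of_nonneg_right (h1 _) (hc _ _)
  have hsq : ∑ X : (Fin ℓ → Fin n) × (Fin ℓ → Fin n), pairSum c X ^ 2 =
      ∑ p : Fin ℓ × Fin ℓ, ∑ p' : Fin ℓ × Fin ℓ, ∑ X : (Fin ℓ → Fin n) × (Fin ℓ → Fin n),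
        c (X.1 p.1) (X.2 p.2) * c (X.1 p'.1) (X.2 p'.2) := by
    simp_rw [pairSum, pow_two, Finset.sum_mul_sum]
    rw [Finset.sum_comm]
    exact Finset.sum_congr rfl fun p _ => Finset.sum_comm
  have hcount : ∀ p : Fin ℓ × Fin ℓ, ∑ p' : Fin ℓ × Fin ℓ, (if p' = p then d else κ / n) =
      d + (ℓ ^ 2 - 1) * (κ / n) := by
    intro p
    have : ∀ p' : Fin ℓ × Fin ℓ, (if p' = p then d else κ / n) =
        (if p' = p then d - κ / n else 0) + κ / n := by
      intro p'
      split_ifs <;> ring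
    simp_rw [this, Finset.sum_add_distrib, Finset.sum_ite_eq']
    simp only [Finset.mem_univ, if_true, Finset.sum_const, Finset.card_univ, Fintype.card_prod,
      Fintype.card_fin, nsmul_eq_mul]
    push_cast
    ring
  rw [hsq]
  refine (Finset.sum_le_sum fun p _ => Finset.sum_le_sum fun p' _ => key p p').trans ?_
  simp_rw [← Finset.sum_mul, hcount]
  rw [← Finset.mul_sum]
  unfold pairSum
  rw [Finset.sum_comm]

lemma prod_mul_prod_update (x : Fin n → ℝ) (hx : ∀ v, x v * x v = 1) (S : Fin ℓ → Fin n)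
    (a : Fin ℓ) (y : Fin n) :
    (∏ j, x (S j)) * ∏ j, x (Function.update S a y j) = x (S a) * x y := by
  rw [← Finset.prod_mul_distrib, ← Finset.mul_prod_erase _ _ (Finset.mem_univ a)]
  rw [Finset.prod_eq_one, mul_one, Function.update_self]
  intro j hj
  rw [Function.update_of_ne (Finset.ne_of_mem_erase hj), hx]

/-- The product of the signs `x` over both tuples. -/
def tupleSign (x : Fin n → ℝ) (X : (Fin ℓ → Fin n) × (Fin ℓ → Fin n)) : ℝ :=
  (∏ j, x (X.1 j)) * ∏ j, x (X.2 j)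

lemma abs_tupleSign (x : Fin n → ℝ) (hx : ∀ v, |x v| = 1)
    (X : (Fin ℓ → Fin n) × (Fin ℓ → Fin n)) : |tupleSign x X| = 1 := by
  simp [tupleSign, abs_mul, Finset.abs_prod, hx]

lemma kikuchi_quadForm (K : Fin n → Fin n → Fin n → Fin n → ℝ)
    (x : Fin n → ℝ) (hx : ∀ v, |x v| = 1) :
    (n : ℝ) ^ 2 * ∑ X, ∑ Y, kikuchi ℓ K X Y * tupleSign x X * tupleSign x Y =
      ((n : ℝ) ^ ℓ) ^ 2 * ℓ ^ 2 *
        ∑ v, ∑ w, ∑ v', ∑ w', K v v' w w' * (x v * x v' * (x w * x w')) := by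
  have hx2 : ∀ v, x v * x v = 1 := fun v => by rw [← abs_mul_abs_self, hx, one_mul]
  rw [← sum_pairSum]
  congr 1
  refine Finset.sum_congr rfl fun X _ => ?_
  simp_rw [mul_assoc]
  rw [sum_kikuchi_mul K X (fun Y => tupleSign x X * tupleSign x Y)]
  refine Finset.sum_congr rfl fun p _ => Finset.sum_congr rfl fun v' _ =>
    Finset.sum_congr rfl fun w' _ => ?_
  congr 1
  unfold tupleSign
  rw [mul_mul_mul_comm, prod_mul_prod_update x hx2, prod_mul_prod_update x hx2]
  ring

end Kikuchi

/-- The signed sum of quartic forms with kernels of small local degree is small. -/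
theorem sum_quartic_le {ι : Type*} [Fintype ι] [DecidableEq ι] {n ℓ : ℕ} (hn : 0 < n) (hℓ : 0 < ℓ)
    (K K' : ι → Fin n → Fin n → Fin n → Fin n → ℝ)
    (hK : ∀ i v v' w w', |K i v v' w w'| ≤ K' i v v' w w')
    (hKs : ∀ i v v' w w', K i v v' w w' = K i v' v w' w)
    (hKs' : ∀ i v v' w w', K' i v v' w w' = K' i v' v w' w)
    (d κ τ s : ℝ) (t : ℕ) (hκ : 0 < κ) (hτ : 0 < τ) (hs : 0 ≤ s)
    (hd : ∀ i v w, ∑ v', ∑ w', K' i v v' w w' ≤ d)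
    (h1 : ∀ i w, ∑ v, ∑ v', ∑ w', K' i v v' w w' ≤ κ)
    (h2 : ∀ i v, ∑ w, ∑ v', ∑ w', K' i v v' w w' ≤ κ)
    (htot : ∑ i, ∑ v, ∑ w, ∑ v', ∑ w', K' i v v' w w' ≤ n * κ ^ 2)
    (hℓd : ((ℓ : ℝ) ^ 2 - 1) * (κ / n) ≤ d)
    (hcard : ((n : ℝ) ^ ℓ) ^ 2 ≤ 2 ^ (2 ^ (t + 1)))
    (hst : (2 : ℝ) ^ (t + 1) * (τ * n / (ℓ ^ 2 * κ ^ 2)) ≤ s ^ 2)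
    (x : (ι → Bool) → Fin n → ℝ) (hx : ∀ b v, |x b v| = 1) :
    ∑ b : ι → Bool, ∑ i, pmo (b i) * ∑ v, ∑ w, ∑ v', ∑ w',
        K i v v' w w' * (x b v * x b v' * (x b w * x b w')) ≤
      (8 * s + 4 * d / τ) * (n * κ ^ 2) * 2 ^ Fintype.card ι := by
  have hn' : (0 : ℝ) < n := by exact_mod_cast hn
  have hℓ' : (0 : ℝ) < ℓ := by exact_mod_cast hℓ
  have hK0 : ∀ i v v' w w', 0 ≤ K' i v v' w w' := fun i v v' w w' =>
    (abs_nonneg _).trans (hK i v v' w w')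
  set V := (Fin ℓ → Fin n) × (Fin ℓ → Fin n)
  set c : ι → Fin n → Fin n → ℝ := fun i v w => ∑ v', ∑ w', K' i v v' w w' with hc
  have hc0 : ∀ i v w, 0 ≤ c i v w := fun i v w =>
    Finset.sum_nonneg fun _ _ => Finset.sum_nonneg fun _ _ => hK0 _ _ _ _ _
  have hC0 : ∀ i (X : V), 0 ≤ pairSum (c i) X := fun i X => Finset.sum_nonneg fun _ _ => hc0 _ _ _
  set N : ℝ := ((n : ℝ) ^ ℓ) ^ 2 with hN
  have hNpos : 0 < N := by positivity
  have hcardV : (Fintype.card V : ℝ) = N := by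
    simp [V, hN, pow_two]
  set W : ℝ := N * ℓ ^ 2 / n ^ 2 with hW
  have hWpos : 0 < W := by positivity
  have hsumC : ∑ i, ∑ X : V, pairSum (c i) X ≤ W * (n * κ ^ 2) := by
    have h : ∀ i, ∑ X : V, pairSum (c i) X = W * ∑ v, ∑ w, c i v w := by
      intro i
      rw [hW, div_mul_eq_mul_div, eq_div_iff (by positivity), mul_comm, sum_pairSum]
    simp_rw [h]
    rw [← Finset.mul_sum]
    exact mul_le_mul_of_nonneg_left htot hWpos.le
  set good : ι → V → Prop := fun i X => pairSum (c i) X ≤ τ with hgood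
  set A : ι → V → V → ℝ := fun i X Y =>
    if good i X ∧ good i Y then kikuchi ℓ (K i) X Y else 0 with hA
  have hAle : ∀ i X Y, |A i X Y| ≤ kikuchi ℓ (K' i) X Y := by
    intro i X Y
    have h := abs_kikuchi_le (K i) (K' i) (hK i) X Y
    simp only [hA]
    split_ifs
    · exact h
    · simpa using (abs_nonneg _).trans h
  have hrow : ∀ i X, ∑ Y, |A i X Y| ≤ pairSum (c i) X := fun i X =>
    (Finset.sum_le_sum fun Y _ => hAle i X Y).trans_eq (sum_kikuchi _ _)
  set d₀ : ℝ := ℓ ^ 2 * κ ^ 2 / n with hd₀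
  have hd₀pos : 0 < d₀ := by positivity
  have hmain := sum_signed_quadForm_le A
    (by
      intro i X Y
      simp only [hA, and_comm (a := good i X), kikuchi_symm (K i) (hKs i) X Y])
    (fun X => ∑ i, pairSum (c i) X + d₀)
    (fun X => add_pos_of_nonneg_of_pos (Finset.sum_nonneg fun i _ => hC0 i X) hd₀pos)
    (τ / d₀) s t (by positivity) hs
    (by
      refine le_of_eq_of_le ?_ hst
      rw [hd₀]
      field_simp)
    (by rw [hcardV]; exact hcard)
    (by
      intro i X
      have hτ' : ∑ Y, |A i X Y| ≤ τ := by
        by_cases hX : good i X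
        · exact (hrow i X).trans hX
        · simp [hA, hX, hτ.le]
      refine hτ'.trans ?_
      have h := Finset.sum_nonneg fun i (_ : i ∈ Finset.univ) => hC0 i X
      calc τ = τ / d₀ * d₀ := by field_simp
        _ ≤ _ := mul_le_mul_of_nonneg_left (by linarith) (by positivity))
    (fun X => (Finset.sum_le_sum fun i _ => hrow i X).trans (by linarith))
    (fun b => tupleSign (x b)) (fun b X => (abs_tupleSign _ (hx b) X).le)
  have hΓ : ∑ X : V, (∑ i, pairSum (c i) X + d₀) ≤ 2 * (W * (n * κ ^ 2)) := by
    rw [Finset.sum_add_distrib, Finset.sum_comm, Finset.sum_const, Finset.card_univ, nsmul_eq_mul,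
      hcardV]
    have : N * d₀ = W * (n * κ ^ 2) := by
      rw [hd₀, hW]
      field_simp
    linarith
  have hbad : ∀ i, ∑ X, ∑ Y, |kikuchi ℓ (K i) X Y - A i X Y| ≤
      4 * d / τ * ∑ X : V, pairSum (c i) X := by
    intro i
    have hpt : ∀ X Y, |kikuchi ℓ (K i) X Y - A i X Y| ≤
        pairSum (c i) X / τ * kikuchi ℓ (K' i) X Y +
          pairSum (c i) Y / τ * kikuchi ℓ (K' i) Y X := by
      intro X Y
      have h := abs_kikuchi_le (K i) (K' i) (hK i) X Y
      have h0 := (abs_nonneg _).trans h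
      rw [← kikuchi_symm (K' i) (hKs' i) X Y]
      have hX := div_nonneg (hC0 i X) hτ.le
      have hY := div_nonneg (hC0 i Y) hτ.le
      simp only [hA]
      split_ifs with hg
      · rw [sub_self, abs_zero]
        positivity
      · rw [sub_zero]
        refine h.trans ?_
        rw [← add_mul]
        refine le_mul_of_one_le_left h0 ?_
        rw [not_and_or] at hg
        rcases hg with hg | hg
        · have : 1 ≤ pairSum (c i) X / τ := (one_le_div hτ).mpr (not_le.mp hg).le
          linarith
        · have : 1 ≤ pairSum (c i) Y / τ := (one_le_div hτ).mpr (not_le.mp hg).le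
          linarith
    have hone : ∑ X : V, ∑ Y, pairSum (c i) X / τ * kikuchi ℓ (K' i) X Y =
        (∑ X : V, pairSum (c i) X ^ 2) / τ := by
      simp_rw [← Finset.mul_sum, sum_kikuchi]
      rw [Finset.sum_div]
      exact Finset.sum_congr rfl fun X _ => by ring
    have hsq := sum_sq_pairSum_le (ℓ := ℓ) hn (c i) (hc0 i) d κ (hd i) (h1 i) (h2 i)
    calc ∑ X, ∑ Y, |kikuchi ℓ (K i) X Y - A i X Y|
        ≤ ∑ X, ∑ Y, (pairSum (c i) X / τ * kikuchi ℓ (K' i) X Y +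
          pairSum (c i) Y / τ * kikuchi ℓ (K' i) Y X) :=
          Finset.sum_le_sum fun X _ => Finset.sum_le_sum fun Y _ => hpt X Y
      _ = (∑ X : V, pairSum (c i) X ^ 2) / τ + (∑ X : V, pairSum (c i) X ^ 2) / τ := by
          simp_rw [Finset.sum_add_distrib]
          rw [hone, Finset.sum_comm, hone]
      _ = 2 / τ * ∑ X : V, pairSum (c i) X ^ 2 := by ring
      _ ≤ 2 / τ * ((2 * d) * ∑ X : V, pairSum (c i) X) := by
          refine mul_le_mul_of_nonneg_left (hsq.trans ?_) (by positivity)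
          exact mul_le_mul_of_nonneg_right (by linarith) (Finset.sum_nonneg fun X _ => hC0 i X)
      _ = _ := by ring
  have hd0 : 0 ≤ d := by
    have : Nonempty (Fin n) := ⟨⟨0, hn⟩⟩
    rcases isEmpty_or_nonempty ι with hι | ⟨⟨i⟩⟩
    · refine le_trans (mul_nonneg ?_ (by positivity)) hℓd
      have : (1 : ℝ) ≤ ℓ := by exact_mod_cast hℓ
      nlinarith
    · exact (hc0 i ⟨0, hn⟩ ⟨0, hn⟩).trans (hd i _ _)
  have hform : ∀ b i, W * ∑ v, ∑ w, ∑ v', ∑ w',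
        K i v v' w w' * (x b v * x b v' * (x b w * x b w')) =
      ∑ X, ∑ Y, A i X Y * tupleSign (x b) X * tupleSign (x b) Y +
      ∑ X, ∑ Y, (kikuchi ℓ (K i) X Y - A i X Y) * tupleSign (x b) X * tupleSign (x b) Y := by
    intro b i
    have hsplit : ∑ X, ∑ Y, A i X Y * tupleSign (x b) X * tupleSign (x b) Y +
        ∑ X, ∑ Y, (kikuchi ℓ (K i) X Y - A i X Y) * tupleSign (x b) X * tupleSign (x b) Y =
        ∑ X, ∑ Y, kikuchi ℓ (K i) X Y * tupleSign (x b) X * tupleSign (x b) Y := by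
      rw [← Finset.sum_add_distrib]
      refine Finset.sum_congr rfl fun X _ => ?_
      rw [← Finset.sum_add_distrib]
      exact Finset.sum_congr rfl fun Y _ => by ring
    rw [hsplit]
    rw [hW, div_mul_eq_mul_div, div_eq_iff (by positivity), ← kikuchi_quadForm (K i) (x b) (hx b)]
    ring
  have herr : ∀ b : ι → Bool, ∑ i, pmo (b i) * ∑ X, ∑ Y,
      (kikuchi ℓ (K i) X Y - A i X Y) * tupleSign (x b) X * tupleSign (x b) Y ≤
      4 * d / τ * (W * (n * κ ^ 2)) := by
    intro b
    calc _ ≤ ∑ i, 4 * d / τ * ∑ X : V, pairSum (c i) X := by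
          refine Finset.sum_le_sum fun i _ => le_trans ?_ (hbad i)
          refine (le_abs_self _).trans ?_
          rw [abs_mul, abs_pmo, one_mul]
          refine (Finset.abs_sum_le_sum_abs _ _).trans (Finset.sum_le_sum fun X _ => ?_)
          refine (Finset.abs_sum_le_sum_abs _ _).trans (Finset.sum_le_sum fun Y _ => ?_)
          rw [abs_mul, abs_mul, abs_tupleSign _ (hx b), abs_tupleSign _ (hx b), mul_one, mul_one]
      _ ≤ _ := by
          rw [← Finset.mul_sum]
          exact mul_le_mul_of_nonneg_left hsumC (by positivity)
  have hscaled : W * ∑ b : ι → Bool, ∑ i, pmo (b i) * ∑ v, ∑ w, ∑ v', ∑ w',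
        K i v v' w w' * (x b v * x b v' * (x b w * x b w')) ≤
      W * ((8 * s + 4 * d / τ) * (n * κ ^ 2) * 2 ^ Fintype.card ι) := by
    have e : W * ∑ b : ι → Bool, ∑ i, pmo (b i) * ∑ v, ∑ w, ∑ v', ∑ w',
        K i v v' w w' * (x b v * x b v' * (x b w * x b w')) =
        (∑ b : ι → Bool, ∑ i, pmo (b i) *
          ∑ X, ∑ Y, A i X Y * tupleSign (x b) X * tupleSign (x b) Y) +
        ∑ b : ι → Bool, ∑ i, pmo (b i) * ∑ X, ∑ Y,
          (kikuchi ℓ (K i) X Y - A i X Y) * tupleSign (x b) X * tupleSign (x b) Y := by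
      rw [← Finset.sum_add_distrib, Finset.mul_sum]
      refine Finset.sum_congr rfl fun b _ => ?_
      rw [← Finset.sum_add_distrib, Finset.mul_sum]
      refine Finset.sum_congr rfl fun i _ => ?_
      rw [mul_left_comm, hform, mul_add]
    have e2 : ∑ b : ι → Bool, ∑ i, pmo (b i) * ∑ X, ∑ Y,
          (kikuchi ℓ (K i) X Y - A i X Y) * tupleSign (x b) X * tupleSign (x b) Y ≤
        2 ^ Fintype.card ι * (4 * d / τ * (W * (n * κ ^ 2))) := by
      refine (Finset.sum_le_sum fun b _ => herr b).trans_eq ?_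
      simp
    have e3 : 4 * s * (∑ X : V, (∑ i, pairSum (c i) X + d₀)) * 2 ^ Fintype.card ι ≤
        4 * s * (2 * (W * (n * κ ^ 2))) * 2 ^ Fintype.card ι := by gcongr
    rw [e]
    calc _ ≤ _ := add_le_add (hmain.trans e3) e2
      _ = _ := by ring
  exact le_of_mul_le_mul_left hscaled hWpos

/-! ### The light part -/

theorem sum_half_one_add_pmo {ι : Type*} [Fintype ι] (c : ι → Bool) (f : ι → ℝ) :
    ∑ i, (1 + pmo (c i)) / 2 * f i = ∑ i : {i // c i = true}, f i := by
  have h : ∀ i, (1 + pmo (c i)) / 2 * f i = if c i = true then f i else 0 := by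
    intro i
    cases c i <;> simp [pmo]
  simp_rw [h]
  rw [← Finset.sum_filter, ← Finset.sum_subtype_eq_sum_filter, Finset.subtype_univ]

theorem sum_half_one_sub_pmo {ι : Type*} [Fintype ι] (c : ι → Bool) (f : ι → ℝ) :
    ∑ i, (1 - pmo (c i)) / 2 * f i = ∑ i : {i // ¬ c i = true}, f i := by
  have h : ∀ i, (1 - pmo (c i)) / 2 * f i = if ¬ c i = true then f i else 0 := by
    intro i
    cases c i <;> simp [pmo]
  simp_rw [h]
  rw [← Finset.sum_filter, ← Finset.sum_subtype_eq_sum_filter, Finset.subtype_univ]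

/-- The quadratic form of the slice of `g` at `u`. -/
def sliceForm {n : ℕ} (g : Fin n → Fin n → Fin n → ℝ) (x : Fin n → ℝ) (u : Fin n) : ℝ :=
  ∑ v, ∑ w, g u v w * (x v * x w)

theorem sum_sum_sum_mul {α β γ : Type*} [Fintype α] [Fintype β] [Fintype γ]
    (f : α → β → ℝ) (h : α → γ → ℝ) :
    ∑ v, ∑ w, ∑ u, f u v * h u w = ∑ u, (∑ v, f u v) * ∑ w, h u w := by
  simp_rw [Finset.sum_mul_sum]
  rw [Finset.sum_comm (s := univ (α := α))]
  exact Finset.sum_congr rfl fun v _ => Finset.sum_comm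

theorem sum_quartic_eq {n : ℕ} (P Q : Fin n → Fin n → Fin n → ℝ) (x : Fin n → ℝ) :
    ∑ v, ∑ w, ∑ v', ∑ w', (∑ u, P u v v' * Q u w w') * (x v * x v' * (x w * x w')) =
      ∑ u, sliceForm P x u * sliceForm Q x u := by
  have h := sum_sum_sum_mul (fun u (p : Fin n × Fin n) => P u p.1 p.2 * (x p.1 * x p.2))
    (fun u (p : Fin n × Fin n) => Q u p.1 p.2 * (x p.1 * x p.2))
  simp only [Fintype.sum_prod_type] at h
  simp only [sliceForm]
  rw [← h]
  refine Finset.sum_congr rfl fun v _ => ?_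
  rw [Finset.sum_comm]
  refine Finset.sum_congr rfl fun v' _ => Finset.sum_congr rfl fun w _ =>
    Finset.sum_congr rfl fun w' _ => ?_
  rw [Finset.sum_mul]
  exact Finset.sum_congr rfl fun u _ => by ring

/-- Bipartite form of the light part: colours on the two sides of the partition `c` are
paired through a common vertex. -/
theorem sum_bipartite_le {k n ℓ : ℕ} (hn : 0 < n) (hℓ : 0 < ℓ) (hk : 0 < k)
    (g : Fin k → Fin n → Fin n → Fin n → ℝ) (hg : ∀ i u v w, 0 ≤ g i u v w)
    (hsymm : ∀ i u v w, g i u v w = g i u w v)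
    (hu : ∀ i u, ∑ v, ∑ w, g i u v w ≤ 1) (hv : ∀ i v, ∑ u, ∑ w, g i u v w ≤ 1)
    (d τ s : ℝ) (t : ℕ) (hd0 : 0 ≤ d) (hτ : 0 < τ) (hs : 0 ≤ s)
    (hd : ∀ u v, ∑ w, ∑ i, g i u v w ≤ d)
    (hℓd : ((ℓ : ℝ) ^ 2 - 1) * (k / n) ≤ d)
    (hcard : ((n : ℝ) ^ ℓ) ^ 2 ≤ 2 ^ (2 ^ (t + 1)))
    (hst : (2 : ℝ) ^ (t + 1) * (τ * n / (ℓ ^ 2 * k ^ 2)) ≤ s ^ 2)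
    (x : (Fin k → Bool) → Fin n → ℝ) (hx : ∀ b v, |x b v| = 1) (c : Fin k → Bool) :
    ∑ b : Fin k → Bool, ∑ u, (∑ i, (1 + pmo (c i)) / 2 * (pmo (b i) * sliceForm (g i) (x b) u)) *
        (∑ j, (1 - pmo (c j)) / 2 * (pmo (b j) * sliceForm (g j) (x b) u)) ≤
      (8 * s + 4 * d / τ) * (n * k ^ 2) * 2 ^ k := by
  have hk' : (0 : ℝ) < k := by exact_mod_cast hk
  simp_rw [sum_half_one_add_pmo, sum_half_one_sub_pmo]
  set ι := {i : Fin k // c i = true}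
  set ι' := {i : Fin k // ¬ c i = true}
  set e := Equiv.piEquivPiSubtypeProd (fun i => c i = true) (fun _ => Bool) with he
  set K : (ι' → Bool) → ι → Fin n → Fin n → Fin n → Fin n → ℝ := fun b' i v v' w w' =>
    ∑ u, g i u v v' * ∑ j : ι', pmo (b' j) * g j u w w' with hKdef
  set K' : ι → Fin n → Fin n → Fin n → Fin n → ℝ := fun i v v' w w' =>
    ∑ u, g i u v v' * ∑ j, g j u w w' with hKdef'
  have hsub : ∀ f : Fin k → ℝ, (∀ j, 0 ≤ f j) → ∑ j : ι', f j ≤ ∑ j, f j := by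
    intro f hf
    rw [← sum_half_one_sub_pmo c f]
    refine Finset.sum_le_sum fun j _ => ?_
    have := hf j
    cases c j <;> simp [pmo, this]
  have hKabs : ∀ b' i v v' w w', |K b' i v v' w w'| ≤ K' i v v' w w' := by
    intro b' i v v' w w'
    refine (Finset.abs_sum_le_sum_abs _ _).trans (Finset.sum_le_sum fun u _ => ?_)
    rw [abs_mul, abs_of_nonneg (hg _ _ _ _)]
    refine mul_le_mul_of_nonneg_left ?_ (hg _ _ _ _)
    refine le_trans ?_ (hsub (fun j => g j u w w') fun j => hg _ _ _ _)
    refine (Finset.abs_sum_le_sum_abs _ _).trans (Finset.sum_le_sum fun j _ => ?_)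
    rw [abs_mul, abs_pmo, one_mul, abs_of_nonneg (hg _ _ _ _)]
  have hfact : ∀ i v w, ∑ v', ∑ w', K' i v v' w w' =
      ∑ u, (∑ v', g i u v v') * ∑ w', ∑ j, g j u w w' := by
    intro i v w
    exact sum_sum_sum_mul (fun u v' => g i u v v') (fun u w' => ∑ j, g j u w w')
  have hv' : ∀ w, ∑ u, ∑ w', ∑ j, g j u w w' ≤ k := by
    intro w
    have h : ∑ u, ∑ w', ∑ j, g j u w w' = ∑ j, ∑ u, ∑ w', g j u w w' := by
      rw [Finset.sum_comm (s := univ (α := Fin k))]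
      exact Finset.sum_congr rfl fun u _ => Finset.sum_comm
    rw [h]
    exact (Finset.sum_le_sum fun j _ => hv j w).trans_eq (by simp)
  have hrow : ∀ u, ∑ w, ∑ w', ∑ j, g j u w w' ≤ k := by
    intro u
    have h : ∑ w, ∑ w', ∑ j, g j u w w' = ∑ j, ∑ w, ∑ w', g j u w w' := by
      rw [Finset.sum_comm (s := univ (α := Fin k))]
      exact Finset.sum_congr rfl fun w _ => Finset.sum_comm
    rw [h]
    exact (Finset.sum_le_sum fun j _ => hu j u).trans_eq (by simp)
  have hdK : ∀ i v w, ∑ v', ∑ w', K' i v v' w w' ≤ d := by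
    intro i v w
    rw [hfact]
    calc _ ≤ ∑ u, (∑ v', g i u v v') * d := by
          refine Finset.sum_le_sum fun u _ => mul_le_mul_of_nonneg_left (hd _ _) ?_
          exact Finset.sum_nonneg fun _ _ => hg _ _ _ _
      _ ≤ 1 * d := by
          rw [← Finset.sum_mul]
          exact mul_le_mul_of_nonneg_right (hv _ _) hd0
      _ = d := one_mul d
  have hB0 : ∀ u w, 0 ≤ ∑ w', ∑ j, g j u w w' := fun u w =>
    Finset.sum_nonneg fun _ _ => Finset.sum_nonneg fun _ _ => hg _ _ _ _
  have h1 : ∀ i w, ∑ v, ∑ v', ∑ w', K' i v v' w w' ≤ k := by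
    intro i w
    simp_rw [hfact]
    rw [Finset.sum_comm]
    refine le_trans (Finset.sum_le_sum fun u _ => ?_) (hv' w)
    rw [← Finset.sum_mul]
    exact mul_le_of_le_one_left (hB0 u w) (hu _ _)
  have h2 : ∀ i v, ∑ w, ∑ v', ∑ w', K' i v v' w w' ≤ k := by
    intro i v
    simp_rw [hfact]
    rw [Finset.sum_comm]
    calc _ ≤ ∑ u, (∑ v', g i u v v') * k := by
          refine Finset.sum_le_sum fun u _ => ?_
          rw [← Finset.mul_sum]
          exact mul_le_mul_of_nonneg_left (hrow u) (Finset.sum_nonneg fun _ _ => hg _ _ _ _)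
      _ ≤ 1 * k := by
          rw [← Finset.sum_mul]
          exact mul_le_mul_of_nonneg_right (hv _ _) hk'.le
      _ = k := one_mul _
  have htot : ∑ i, ∑ v, ∑ w, ∑ v', ∑ w', K' i v v' w w' ≤ n * (k : ℝ) ^ 2 := by
    have hcι : (Fintype.card ι : ℝ) ≤ k := by
      have := Fintype.card_subtype_le (fun i : Fin k => c i = true)
      rw [Fintype.card_fin] at this
      exact_mod_cast this
    calc _ ≤ ∑ i : ι, ∑ v : Fin n, (k : ℝ) :=
          Finset.sum_le_sum fun i _ => Finset.sum_le_sum fun v _ => h2 i v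
      _ = Fintype.card ι * (n * k) := by simp
      _ ≤ k * (n * k) := by gcongr
      _ = _ := by ring
  have hmain : ∀ b' : ι' → Bool, _ := fun b' =>
    sum_quartic_le hn hℓ (K b') K' (hKabs b')
      (fun i v v' w w' => by
        simp only [hKdef]
        simp_rw [hsymm _ _ v v', hsymm _ _ w w'])
      (fun i v v' w w' => by
        simp only [hKdef']
        simp_rw [hsymm _ _ v v', hsymm _ _ w w'])
      d k τ s t hk' hτ hs hdK h1 h2 htot hℓd hcard hst
      (fun b => x (e.symm (b, b'))) (fun b v => hx _ v)
  have hcards : (2 : ℝ) ^ Fintype.card ι * 2 ^ Fintype.card ι' = 2 ^ k := by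
    have := Fintype.card_congr e
    simp only [Fintype.card_prod, Fintype.card_fun, Fintype.card_bool, Fintype.card_fin] at this
    exact_mod_cast this.symm
  calc _ = ∑ b' : ι' → Bool, ∑ b : ι → Bool, ∑ i, pmo (b i) * ∑ v, ∑ w, ∑ v', ∑ w',
        K b' i v v' w w' * (x (e.symm (b, b')) v * x (e.symm (b, b')) v' *
          (x (e.symm (b, b')) w * x (e.symm (b, b')) w')) := by
        rw [← e.symm.sum_comp, Fintype.sum_prod_type_right]
        refine Finset.sum_congr rfl fun b' _ => Finset.sum_congr rfl fun b _ => ?_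
        have hb : ∀ i : ι, e.symm (b, b') i = b i := fun i => by
          simp [he, Equiv.piEquivPiSubtypeProd, i.2]
        have hb' : ∀ j : ι', e.symm (b, b') j = b' j := fun j => by
          simp [he, Equiv.piEquivPiSubtypeProd, j.2]
        refine (Finset.sum_congr rfl fun u _ => congrArg₂ (· * ·)
          (Finset.sum_congr rfl fun i _ => congrArg (fun z => pmo z * _) (hb i))
          (Finset.sum_congr rfl fun j _ => congrArg (fun z => pmo z * _) (hb' j))).trans ?_
        have hright : ∀ u, ∑ j : ι', pmo (b' j) * sliceForm (g j) (x (e.symm (b, b'))) u =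
            sliceForm (fun u w w' => ∑ j : ι', pmo (b' j) * g j u w w') (x (e.symm (b, b'))) u := by
          intro u
          simp_rw [sliceForm, Finset.mul_sum, Finset.sum_mul]
          rw [Finset.sum_comm]
          refine Finset.sum_congr rfl fun w _ => ?_
          rw [Finset.sum_comm]
          simp only [mul_assoc]
        simp_rw [hright, Finset.sum_mul, mul_assoc (pmo _)]
        rw [Finset.sum_comm]
        refine Finset.sum_congr rfl fun i _ => ?_
        rw [← Finset.mul_sum, ← sum_quartic_eq]
    _ ≤ ∑ b' : ι' → Bool, (8 * s + 4 * d / τ) * (n * k ^ 2) * 2 ^ Fintype.card ι :=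
        Finset.sum_le_sum fun b' _ => hmain b'
    _ = _ := by
        rw [← hcards]
        simp
        ring

theorem sum_pmo_mul_pmo {ι : Type*} [Fintype ι] [DecidableEq ι] (i j : ι) :
    ∑ c : ι → Bool, pmo (c i) * pmo (c j) = if i = j then (2 : ℝ) ^ Fintype.card ι else 0 := by
  split_ifs with h
  · subst h
    simp [pmo_mul_self]
  · have := sum_prod_pmo ({i, j} : Finset ι)
    simpa [Finset.prod_pair h] using this

theorem sum_sq_sum_pmo_mul {ι : Type*} [Fintype ι] [DecidableEq ι] (y : ι → ℝ) :
    ∑ c : ι → Bool, (∑ i, pmo (c i) * y i) ^ 2 = 2 ^ Fintype.card ι * ∑ i, y i ^ 2 := by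
  simp_rw [sq, Finset.sum_mul_sum]
  rw [Finset.sum_comm, Finset.mul_sum]
  refine Finset.sum_congr rfl fun i _ => ?_
  rw [Finset.sum_comm]
  have h : ∀ j, ∑ c : ι → Bool, pmo (c i) * y i * (pmo (c j) * y j) =
      if i = j then 2 ^ Fintype.card ι * (y i * y j) else 0 := by
    intro j
    have e : ∀ c : ι → Bool, pmo (c i) * y i * (pmo (c j) * y j) =
        pmo (c i) * pmo (c j) * (y i * y j) := fun c => by ring
    simp_rw [e, ← Finset.sum_mul, sum_pmo_mul_pmo, ite_mul, zero_mul]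
  simp_rw [h]
  simp

/-- Averaging over random bipartitions recovers the off-diagonal part of a square. -/
theorem sum_bipartition_mul {ι : Type*} [Fintype ι] [DecidableEq ι] (y : ι → ℝ) :
    ∑ c : ι → Bool, (∑ i, (1 + pmo (c i)) / 2 * y i) * (∑ j, (1 - pmo (c j)) / 2 * y j) =
      2 ^ Fintype.card ι / 4 * ((∑ i, y i) ^ 2 - ∑ i, y i ^ 2) := by
  have h : ∀ c : ι → Bool,
      (∑ i, (1 + pmo (c i)) / 2 * y i) * (∑ j, (1 - pmo (c j)) / 2 * y j) =
      ((∑ i, y i) ^ 2 - (∑ i, pmo (c i) * y i) ^ 2) / 4 := by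
    intro c
    have e1 : ∑ i, (1 + pmo (c i)) / 2 * y i = (∑ i, y i + ∑ i, pmo (c i) * y i) / 2 := by
      rw [← Finset.sum_add_distrib, Finset.sum_div]
      exact Finset.sum_congr rfl fun i _ => by ring
    have e2 : ∑ i, (1 - pmo (c i)) / 2 * y i = (∑ i, y i - ∑ i, pmo (c i) * y i) / 2 := by
      rw [← Finset.sum_sub_distrib, Finset.sum_div]
      exact Finset.sum_congr rfl fun i _ => by ring
    rw [e1, e2]
    ring
  simp_rw [h]
  rw [← Finset.sum_div, Finset.sum_sub_distrib, sum_sq_sum_pmo_mul]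
  simp
  ring

theorem abs_sliceForm_le {n : ℕ} (g : Fin n → Fin n → Fin n → ℝ) (hg : ∀ u v w, 0 ≤ g u v w)
    (x : Fin n → ℝ) (hx : ∀ v, |x v| = 1) (u : Fin n) :
    |sliceForm g x u| ≤ ∑ v, ∑ w, g u v w := by
  refine (Finset.abs_sum_le_sum_abs _ _).trans (Finset.sum_le_sum fun v _ => ?_)
  refine (Finset.abs_sum_le_sum_abs _ _).trans (Finset.sum_le_sum fun w _ => ?_)
  rw [abs_mul, abs_mul, hx, hx, abs_of_nonneg (hg _ _ _), mul_one, mul_one]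

/-- Bound on the correlation of the light part, in which every pair containing the
distinguished vertex has codegree at most `d`. -/
theorem sq_sum_light_le {k n ℓ : ℕ} (hn : 0 < n) (hℓ : 0 < ℓ) (hk : 0 < k)
    (g : Fin k → Fin n → Fin n → Fin n → ℝ) (hg : ∀ i u v w, 0 ≤ g i u v w)
    (hsymm : ∀ i u v w, g i u v w = g i u w v)
    (hu : ∀ i u, ∑ v, ∑ w, g i u v w ≤ 1) (hv : ∀ i v, ∑ u, ∑ w, g i u v w ≤ 1)
    (d τ s : ℝ) (t : ℕ) (hd0 : 0 ≤ d) (hτ : 0 < τ) (hs : 0 ≤ s)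
    (hd : ∀ u v, ∑ w, ∑ i, g i u v w ≤ d)
    (hℓd : ((ℓ : ℝ) ^ 2 - 1) * (k / n) ≤ d)
    (hcard : ((n : ℝ) ^ ℓ) ^ 2 ≤ 2 ^ (2 ^ (t + 1)))
    (hst : (2 : ℝ) ^ (t + 1) * (τ * n / (ℓ ^ 2 * k ^ 2)) ≤ s ^ 2)
    (x : (Fin k → Bool) → Fin n → ℝ) (hx : ∀ b v, |x b v| = 1) :
    (∑ b : Fin k → Bool, ∑ i, pmo (b i) * ∑ u, ∑ v, ∑ w, g i u v w * x b u * x b v * x b w) ^ 2 ≤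
      (4 * (8 * s + 4 * d / τ) + 1 / k) * (n * k * 2 ^ k) ^ 2 := by
  have hk' : (0 : ℝ) < k := by exact_mod_cast hk
  set y : (Fin k → Bool) → Fin n → Fin k → ℝ := fun b u i =>
    pmo (b i) * sliceForm (g i) (x b) u with hy
  set B : ℝ := (8 * s + 4 * d / τ) * (n * k ^ 2) * 2 ^ k with hB
  have hy1 : ∀ b u i, y b u i ^ 2 ≤ 1 := by
    intro b u i
    rw [sq_le_one_iff_abs_le_one, hy]
    simp only
    rw [abs_mul, abs_pmo, one_mul]
    exact (abs_sliceForm_le _ (hg i) _ (hx b) u).trans (hu i u)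
  have havg : ∑ b : Fin k → Bool, ∑ u : Fin n, (2 : ℝ) ^ k / 4 * ((∑ i, y b u i) ^ 2 - ∑ i, y b u i ^ 2) ≤ 2 ^ k * B := by
    calc _ = ∑ c : Fin k → Bool, ∑ b : Fin k → Bool, ∑ u : Fin n, (∑ i, (1 + pmo (c i)) / 2 * y b u i) *
            (∑ j, (1 - pmo (c j)) / 2 * y b u j) := by
          symm
          rw [Finset.sum_comm]
          refine Finset.sum_congr rfl fun b _ => ?_
          rw [Finset.sum_comm]
          refine Finset.sum_congr rfl fun u _ => ?_
          rw [sum_bipartition_mul, Fintype.card_fin]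
      _ ≤ ∑ c : Fin k → Bool, B := Finset.sum_le_sum fun c _ =>
          sum_bipartite_le hn hℓ hk g hg hsymm hu hv d τ s t hd0 hτ hs hd hℓd hcard hst x hx c
      _ = _ := by simp
  have hdiag : ∑ b : Fin k → Bool, ∑ u : Fin n, ∑ i, y b u i ^ 2 ≤ 2 ^ k * (n * k) := by
    calc _ ≤ ∑ b : Fin k → Bool, ∑ u : Fin n, ∑ i : Fin k, (1 : ℝ) :=
          Finset.sum_le_sum fun b _ => Finset.sum_le_sum fun u _ =>
            Finset.sum_le_sum fun i _ => hy1 b u i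
      _ = _ := by simp
  have hsq : ∑ b : Fin k → Bool, ∑ u : Fin n, (∑ i, y b u i) ^ 2 ≤ 4 * B + 2 ^ k * (n * k) := by
    have e : ∑ b : Fin k → Bool, ∑ u : Fin n, (2 : ℝ) ^ k / 4 * ((∑ i, y b u i) ^ 2 - ∑ i, y b u i ^ 2) =
        2 ^ k * ((∑ b : Fin k → Bool, ∑ u : Fin n, (∑ i, y b u i) ^ 2 - ∑ b, ∑ u, ∑ i, y b u i ^ 2) / 4) := by
      simp_rw [← Finset.mul_sum, Finset.sum_sub_distrib]
      ring
    rw [e] at havg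
    have := le_of_mul_le_mul_left havg (by positivity)
    linarith
  have hphi : ∑ b : Fin k → Bool, ∑ i, pmo (b i) *
      ∑ u, ∑ v, ∑ w, g i u v w * x b u * x b v * x b w =
      ∑ p : (Fin k → Bool) × Fin n, x p.1 p.2 * ∑ i, y p.1 p.2 i := by
    rw [Fintype.sum_prod_type]
    refine Finset.sum_congr rfl fun b _ => ?_
    simp_rw [Finset.mul_sum]
    rw [Finset.sum_comm]
    refine Finset.sum_congr rfl fun u _ => Finset.sum_congr rfl fun i _ => ?_
    simp_rw [hy, sliceForm, Finset.mul_sum]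
    exact Finset.sum_congr rfl fun v _ => Finset.sum_congr rfl fun w _ => by ring
  have hx2 : ∑ p : (Fin k → Bool) × Fin n, x p.1 p.2 ^ 2 = 2 ^ k * n := by
    have : ∀ b v, x b v ^ 2 = 1 := fun b v => by rw [← sq_abs, hx, one_pow]
    simp [this]
  rw [hphi]
  calc _ ≤ _ := Finset.sum_mul_sq_le_sq_mul_sq _ _ _
    _ ≤ 2 ^ k * n * (4 * B + 2 ^ k * (n * k)) := by
        rw [hx2, Fintype.sum_prod_type]
        exact mul_le_mul_of_nonneg_left hsq (by positivity)
    _ = _ := by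
        rw [hB]
        field_simp

/-- A symmetric family of fractional `3`-uniform matchings has small correlation with
any `±1`-valued encoding, once the parameters `d`, `ℓ`, `t`, `t'` are compatible. -/
theorem sum_correlation_lt {k n ℓ : ℕ} (hn : 0 < n) (hℓ : 0 < ℓ) (hk : 0 < k)
    (h : Fin k → Fin n → Fin n → Fin n → ℝ) (hh : ∀ i u v w, 0 ≤ h i u v w)
    (hswap : ∀ i u v w, h i u v w = h i v u w) (hsymm : ∀ i u v w, h i u v w = h i u w v)
    (hu : ∀ i u, ∑ v, ∑ w, h i u v w ≤ 1)
    (β d : ℝ) (t t' : ℕ) (hβ : 0 < β) (hd : 0 < d) (hdk : d ≤ k)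
    (hdβ : 256 * 2 ^ (t' + 1) ≤ β ^ 2 * d) (hkβ : 16 ≤ β ^ 2 * k)
    (hcard' : (n : ℝ) + n ^ 2 ≤ 2 ^ (2 ^ (t' + 1)))
    (hℓd : ((ℓ : ℝ) ^ 2 - 1) * (k / n) ≤ d)
    (hcard : ((n : ℝ) ^ ℓ) ^ 2 ≤ 2 ^ (2 ^ (t + 1)))
    (hst : (2 : ℝ) ^ (t + 1) * (256 * d / β ^ 2 * n / (ℓ ^ 2 * k ^ 2)) ≤ (β ^ 2 / 512) ^ 2)
    (x : (Fin k → Bool) → Fin n → ℝ) (hx : ∀ b v, |x b v| = 1) :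
    ∑ b : Fin k → Bool, ∑ i, pmo (b i) * ∑ u, ∑ v, ∑ w, h i u v w * x b u * x b v * x b w <
      β * (n * k * 2 ^ k) := by
  have hk' : (0 : ℝ) < k := by exact_mod_cast hk
  have hn' : (0 : ℝ) < n := by exact_mod_cast hn
  set D : Fin n → Fin n → ℝ := fun v w => ∑ i, ∑ u, h i u v w with hD
  have hDsymm : ∀ v w, D v w = D w v := fun v w =>
    Finset.sum_congr rfl fun i _ => Finset.sum_congr rfl fun u _ => hsymm i u v w
  have hD0 : ∀ v w, 0 ≤ D v w := fun v w =>
    Finset.sum_nonneg fun i _ => Finset.sum_nonneg fun u _ => hh i u v w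
  have hrot : ∀ i u v w, h i u v w = h i w u v := fun i u v w => by
    rw [hsymm, hswap]
  have hone : ∀ i v w, ∑ u, h i u v w ≤ 1 := by
    intro i v w
    refine le_trans ?_ (hu i v)
    rw [Finset.sum_comm]
    have : ∑ u, h i u v w = ∑ u, h i v u w := Finset.sum_congr rfl fun u _ => hswap i u v w
    rw [this]
    exact Finset.single_le_sum (f := fun w => ∑ u, h i v u w)
      (fun w _ => Finset.sum_nonneg fun u _ => hh i v u w) (Finset.mem_univ w)
  have hDsum : ∑ v, ∑ w, D v w ≤ n * k := by
    calc _ = ∑ i, ∑ v, ∑ w, ∑ u, h i v w u := by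
          simp_rw [hD]
          rw [Finset.sum_comm (s := univ (α := Fin k))]
          refine Finset.sum_congr rfl fun v _ => ?_
          rw [Finset.sum_comm (s := univ (α := Fin k))]
          exact Finset.sum_congr rfl fun w _ => Finset.sum_congr rfl fun i _ =>
            Finset.sum_congr rfl fun u _ => (hrot i v w u).symm
      _ ≤ ∑ i : Fin k, ∑ v : Fin n, (1 : ℝ) :=
          Finset.sum_le_sum fun i _ => Finset.sum_le_sum fun v _ => hu i v
      _ = n * k := by simp [mul_comm]
  set g₁ : Fin k → Fin n → Fin n → Fin n → ℝ := fun i u v w =>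
    if d < D v w then h i u v w else 0 with hg₁
  set g₂ : Fin k → Fin n → Fin n → Fin n → ℝ := fun i u v w =>
    if D u v ≤ d ∧ d < D v w then h i u v w else 0 with hg₂
  set g : Fin k → Fin n → Fin n → Fin n → ℝ := fun i u v w =>
    if D u v ≤ d ∧ D u w ≤ d then h i u v w else 0 with hg
  have hg₁_nonneg : ∀ i u v w, 0 ≤ g₁ i u v w := by
    intro i u v w
    simp only [hg₁]
    split_ifs
    exacts [hh i u v w, le_rfl]
  have hg₁_le : ∀ i u v w, g₁ i u v w ≤ h i u v w := by
    intro i u v w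
    simp only [hg₁]
    split_ifs
    exacts [le_rfl, hh i u v w]
  have hg₂_nonneg : ∀ i u v w, 0 ≤ g₂ i u v w := by
    intro i u v w
    simp only [hg₂]
    split_ifs
    exacts [hh i u v w, le_rfl]
  have hg₂_le : ∀ i u v w, g₂ i u v w ≤ h i u v w := by
    intro i u v w
    simp only [hg₂]
    split_ifs
    exacts [le_rfl, hh i u v w]
  have hg_nonneg : ∀ i u v w, 0 ≤ g i u v w := by
    intro i u v w
    simp only [hg]
    split_ifs
    exacts [hh i u v w, le_rfl]
  have hg_le : ∀ i u v w, g i u v w ≤ h i u v w := by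
    intro i u v w
    simp only [hg]
    split_ifs
    exacts [le_rfl, hh i u v w]
  have hs₂ : (2 : ℝ) ^ (t' + 1) / d ≤ (β / 16) ^ 2 := by
    rw [div_le_iff₀ hd]
    nlinarith
  have hheavy₁ := sum_heavy_le g₁ hg₁_nonneg
    (fun i u => (Finset.sum_le_sum fun v _ => Finset.sum_le_sum fun w _ =>
      hg₁_le i u v w).trans (hu i u))
    (fun i v w => (Finset.sum_le_sum fun u _ => hg₁_le i u v w).trans (hone i v w))
    D hD0 (fun v w => Finset.sum_le_sum fun i _ => Finset.sum_le_sum fun u _ => hg₁_le i u v w)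
    hDsum d hd hdk (fun i u v w hvw => if_neg hvw) t' hcard' (β / 16) (by positivity) hs₂ x
    (fun b v => (hx b v).le)
  have hheavy₂ := sum_heavy_le g₂ hg₂_nonneg
    (fun i u => (Finset.sum_le_sum fun v _ => Finset.sum_le_sum fun w _ =>
      hg₂_le i u v w).trans (hu i u))
    (fun i v w => (Finset.sum_le_sum fun u _ => hg₂_le i u v w).trans (hone i v w))
    D hD0 (fun v w => Finset.sum_le_sum fun i _ => Finset.sum_le_sum fun u _ => hg₂_le i u v w)
    hDsum d hd hdk (fun i u v w hvw => if_neg fun hc => hvw hc.2) t' hcard' (β / 16)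
    (by positivity) hs₂ x (fun b v => (hx b v).le)
  have hlight := sq_sum_light_le hn hℓ hk g hg_nonneg
    (fun i u v w => by
      simp only [hg, and_comm (a := D u v ≤ d), hsymm i u v w])
    (fun i u => (Finset.sum_le_sum fun v _ => Finset.sum_le_sum fun w _ =>
      hg_le i u v w).trans (hu i u))
    (fun i v => by
      refine le_trans (Finset.sum_le_sum fun u _ => Finset.sum_le_sum fun w _ =>
        hg_le i u v w) (le_trans (le_of_eq ?_) (hu i v))
      exact Finset.sum_congr rfl fun u _ => Finset.sum_congr rfl fun w _ => hswap i u v w)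
    d (256 * d / β ^ 2) (β ^ 2 / 512) t hd.le (by positivity) (by positivity)
    (fun u v => by
      by_cases huv : D u v ≤ d
      · refine le_trans ?_ huv
        rw [Finset.sum_comm]
        refine Finset.sum_le_sum fun i _ => Finset.sum_le_sum fun w _ => ?_
        rw [← hrot i u v w]
        exact hg_le i u v w
      · simp [hg, huv, hd.le])
    hℓd hcard hst x hx
  have hsplit : ∑ b : Fin k → Bool, ∑ i, pmo (b i) *
        ∑ u, ∑ v, ∑ w, h i u v w * x b u * x b v * x b w =
      ∑ b : Fin k → Bool, ∑ i, pmo (b i) * ∑ u, ∑ v, ∑ w, g i u v w * x b u * x b v * x b w +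
      (∑ b : Fin k → Bool, ∑ i, pmo (b i) * ∑ u, ∑ v, ∑ w, g₁ i u v w * x b u * x b v * x b w +
      ∑ b : Fin k → Bool, ∑ i, pmo (b i) *
        ∑ u, ∑ v, ∑ w, g₂ i u v w * x b u * x b v * x b w) := by
    simp_rw [← Finset.sum_add_distrib, ← mul_add]
    refine Finset.sum_congr rfl fun b _ => Finset.sum_congr rfl fun i _ => ?_
    congr 1
    have e₁ : ∑ u, ∑ v, ∑ w, g₁ i u v w * x b u * x b v * x b w =
        ∑ u, ∑ v, ∑ w, g₁ i w u v * x b u * x b v * x b w := by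
      rw [Finset.sum_comm]
      refine Finset.sum_congr rfl fun v _ => ?_
      rw [Finset.sum_comm]
      exact Finset.sum_congr rfl fun w _ => Finset.sum_congr rfl fun u _ => by ring
    have e₂ : ∑ u, ∑ v, ∑ w, g₂ i u v w * x b u * x b v * x b w =
        ∑ u, ∑ v, ∑ w, g₂ i v u w * x b u * x b v * x b w := by
      rw [Finset.sum_comm]
      exact Finset.sum_congr rfl fun v _ => Finset.sum_congr rfl fun u _ =>
        Finset.sum_congr rfl fun w _ => by ring
    rw [e₁, e₂]
    simp_rw [← Finset.sum_add_distrib, ← add_mul]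
    refine Finset.sum_congr rfl fun u _ => Finset.sum_congr rfl fun v _ =>
      Finset.sum_congr rfl fun w _ => ?_
    congr 3
    simp only [hg, hg₁, hg₂, ← hrot i u v w, ← hswap i u v w, hDsymm v u]
    by_cases h₁ : D u v ≤ d <;> by_cases h₂ : D u w ≤ d <;>
      simp [h₁, h₂, not_lt.2, not_le.1]
  set M : ℝ := n * k * 2 ^ k with hM
  have hM0 : 0 < M := by positivity
  by_contra! hcon
  rw [hsplit] at hcon
  set Λ := ∑ b : Fin k → Bool, ∑ i, pmo (b i) *
    ∑ u, ∑ v, ∑ w, g i u v w * x b u * x b v * x b w with hΛ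
  have hlow : β / 2 * M ≤ Λ := by
    have e : 4 * (β / 16) * (n * k) * 2 ^ k = β / 4 * M := by rw [hM]; ring
    rw [e] at hheavy₁ hheavy₂
    linarith
  have hsqlow : (β / 2 * M) ^ 2 ≤ Λ ^ 2 := pow_le_pow_left₀ (by positivity) hlow 2
  have hco : 4 * (8 * (β ^ 2 / 512) + 4 * d / (256 * d / β ^ 2)) + 1 / (k : ℝ) ≤ 3 / 16 * β ^ 2 := by
    have e1 : 4 * d / (256 * d / β ^ 2) = β ^ 2 / 64 := by
      field_simp
      norm_num
    have e2 : 1 / (k : ℝ) ≤ β ^ 2 / 16 := by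
      rw [div_le_div_iff₀ hk' (by norm_num)]
      linarith
    rw [e1]
    linarith
  have : (β / 2 * M) ^ 2 ≤ 3 / 16 * β ^ 2 * M ^ 2 :=
    hsqlow.trans (hlight.trans (mul_le_mul_of_nonneg_right hco (by positivity)))
  have hpos : 0 < β ^ 2 * M ^ 2 := by positivity
  nlinarith

/-! ### Choice of parameters -/

theorem exists_two_pow_between {y : ℝ} (hy : 1 ≤ y) :
    ∃ t : ℕ, y ≤ 2 ^ (t + 1) ∧ (2 : ℝ) ^ (t + 1) ≤ 2 * y := by
  obtain ⟨t, ht, ht'⟩ := exists_nat_pow_near hy (one_lt_two (α := ℝ))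
  exact ⟨t, ht'.le, by rw [pow_succ]; linarith⟩

theorem pow_le_two_pow_of_log_le {n m N : ℕ} (hn : 0 < n) (h : 2 * m * Real.log n ≤ N) :
    (n : ℝ) ^ m ≤ 2 ^ N := by
  have hn' : (0 : ℝ) < n := by exact_mod_cast hn
  rw [← Real.log_le_log_iff (by positivity) (by positivity), Real.log_pow, Real.log_pow]
  have := Real.log_two_gt_d9
  have hN : (0 : ℝ) ≤ N := Nat.cast_nonneg N
  nlinarith

/-- A symmetric family of fractional `3`-uniform matchings correlating with a `±1`-valued
encoding forces a near-cubic relation between the number of colours and of vertices. -/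
theorem cube_le_of_correlation {k n : ℕ} (hn : 2 ≤ n) (hk : 0 < k)
    (h : Fin k → Fin n → Fin n → Fin n → ℝ) (hh : ∀ i u v w, 0 ≤ h i u v w)
    (hswap : ∀ i u v w, h i u v w = h i v u w) (hsymm : ∀ i u v w, h i u v w = h i u w v)
    (hu : ∀ i u, ∑ v, ∑ w, h i u v w ≤ 1)
    (x : (Fin k → Bool) → Fin n → ℝ) (hx : ∀ b v, |x b v| = 1) {β : ℝ} (hβ : 0 < β)
    (hcor : β * (n * k * 2 ^ k) ≤ ∑ b : Fin k → Bool, ∑ i, pmo (b i) *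
      ∑ u, ∑ v, ∑ w, h i u v w * x b u * x b v * x b w) :
    (k : ℝ) ^ 3 ≤ (2 ^ 30 * 3072) ^ 2 * n * Real.log n ^ 6 / β ^ 16 := by
  have hk' : (0 : ℝ) < k := by exact_mod_cast hk
  have hn2 : (2 : ℝ) ≤ n := by exact_mod_cast hn
  have hn0 : 0 < n := by omega
  have hn' : (0 : ℝ) < n := by linarith
  have hβ1 : β ≤ 1 := by
    have hle : ∑ b : Fin k → Bool, ∑ i, pmo (b i) *
        ∑ u, ∑ v, ∑ w, h i u v w * x b u * x b v * x b w ≤ n * k * 2 ^ k := by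
      calc _ ≤ ∑ b : Fin k → Bool, ∑ i : Fin k, ∑ u : Fin n, (1 : ℝ) := by
            refine Finset.sum_le_sum fun b _ => Finset.sum_le_sum fun i _ => ?_
            refine (le_abs_self _).trans ?_
            rw [abs_mul, abs_pmo, one_mul]
            refine (Finset.abs_sum_le_sum_abs _ _).trans (Finset.sum_le_sum fun u _ => ?_)
            refine le_trans ?_ (hu i u)
            refine (Finset.abs_sum_le_sum_abs _ _).trans (Finset.sum_le_sum fun v _ => ?_)
            refine (Finset.abs_sum_le_sum_abs _ _).trans (Finset.sum_le_sum fun w _ => ?_)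
            simp only [abs_mul, hx, mul_one, abs_of_nonneg (hh i u v w), le_refl]
        _ = _ := by simp; ring
    have hM : (0 : ℝ) < n * k * 2 ^ k := by positivity
    exact le_of_mul_le_mul_right (by linarith) hM
  set lg := Real.log n with hlg
  have hlg2 : 0.69 ≤ lg := by
    have h1 := Real.log_two_gt_d9
    have h2 := Real.log_le_log (by norm_num) hn2
    linarith
  have hlg0 : 0 < lg := by linarith
  by_contra! hcon
  rw [div_lt_iff₀ (by positivity)] at hcon
  obtain ⟨t', ht'1, ht'2⟩ := exists_two_pow_between (y := 6 * lg) (by linarith)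
  have hβ2 : 0 < β ^ 2 := by positivity
  set d : ℝ := 3072 * lg / β ^ 2 with hd
  have hdβ : β ^ 2 * d = 3072 * lg := by rw [hd]; field_simp
  have hd3 : 3072 * lg ≤ d := by
    rw [hd, le_div_iff₀ hβ2]
    have : β ^ 2 ≤ 1 := pow_le_one₀ hβ.le hβ1
    nlinarith
  have hdk : d ≤ k := by
    refine le_of_pow_le_pow_left₀ (n := 3) (by norm_num) hk'.le ?_
    have hb : 0 < β ^ 16 := by positivity
    refine le_of_mul_le_mul_right (le_trans ?_ hcon.le) hb
    have e : d ^ 3 * β ^ 16 = (3072 * lg) ^ 3 * β ^ 10 := by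
      rw [hd]; field_simp
    rw [e]
    have hb10 : β ^ 10 ≤ 1 := pow_le_one₀ hβ.le hβ1
    have hl3 : (0.69 : ℝ) ^ 3 ≤ lg ^ 3 := pow_le_pow_left₀ (by norm_num) hlg2 3
    calc (3072 * lg) ^ 3 * β ^ 10 ≤ (3072 * lg) ^ 3 * 1 := by gcongr
      _ ≤ (2 ^ 30 * 3072) ^ 2 * 2 * (lg ^ 3 * 0.69 ^ 3) := by
          have : 0 < lg ^ 3 := by positivity
          nlinarith
      _ ≤ (2 ^ 30 * 3072) ^ 2 * n * (lg ^ 3 * lg ^ 3) := by gcongr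
      _ = _ := by ring
  obtain ⟨ℓ, hℓ0, hℓ1, hℓ2⟩ : ∃ ℓ : ℕ, 0 < ℓ ∧ (n : ℝ) ≤ ℓ ^ 2 * k ∧
      ((ℓ : ℝ) ^ 2 - 1) * (k / n) ≤ 3 := by
    set q := Real.sqrt (n / k) with hq
    have hq0 : 0 < q := Real.sqrt_pos.2 (by positivity)
    have hqq : q ^ 2 = n / k := Real.sq_sqrt (by positivity)
    have hkn : (k : ℝ) / n = 1 / q ^ 2 := by rw [hqq]; field_simp
    have hle := Nat.le_ceil q
    have hlt := Nat.ceil_lt_add_one hq0.le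
    refine ⟨⌈q⌉₊, Nat.ceil_pos.2 hq0, ?_, ?_⟩
    · rw [← div_le_iff₀ hk', ← hqq]
      exact pow_le_pow_left₀ hq0.le hle 2
    · rw [hkn, mul_one_div, div_le_iff₀ (by positivity)]
      rcases le_or_gt q 1 with h1 | h1
      · have : (⌈q⌉₊ : ℝ) ≤ 1 := by exact_mod_cast Nat.ceil_le.2 (by simpa using h1)
        nlinarith
      · nlinarith
  have hℓ' : (1 : ℝ) ≤ ℓ := by exact_mod_cast hℓ0
  obtain ⟨t, ht1, ht2⟩ := exists_two_pow_between (y := 4 * ℓ * lg) (by nlinarith)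
  refine absurd hcor (not_le.2 (sum_correlation_lt hn0 hℓ0 hk h hh hswap hsymm hu β d t t' hβ
    (by positivity) hdk ?_ ?_ ?_ (by linarith) ?_ ?_ x hx))
  · rw [hdβ]
    linarith
  · calc (16 : ℝ) ≤ 3072 * lg := by linarith
      _ = β ^ 2 * d := hdβ.symm
      _ ≤ β ^ 2 * k := by gcongr
  · refine le_trans ?_ (pow_le_two_pow_of_log_le (m := 3) hn0 ?_)
    · nlinarith [mul_pos hn' hn']
    · push_cast
      linarith
  · rw [← pow_mul]
    refine pow_le_two_pow_of_log_le hn0 ?_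
    push_cast
    linarith
  · have hmul : 2 ^ 29 * 3072 * (lg ^ 2 * n) ≤ β ^ 8 * (ℓ * k ^ 2) := by
      refine le_of_pow_le_pow_left₀ (n := 2) (by norm_num) (by positivity) ?_
      have hl : 1 ≤ 4 * lg ^ 2 := by nlinarith
      calc (2 ^ 29 * 3072 * (lg ^ 2 * n)) ^ 2
          = (2 ^ 29 * 3072) ^ 2 * lg ^ 4 * n ^ 2 * 1 := by ring
        _ ≤ (2 ^ 29 * 3072) ^ 2 * lg ^ 4 * n ^ 2 * (4 * lg ^ 2) := by gcongr
        _ = n * ((2 ^ 30 * 3072) ^ 2 * n * lg ^ 6) := by ring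
        _ ≤ n * (k ^ 3 * β ^ 16) := by gcongr
        _ ≤ ℓ ^ 2 * k * (k ^ 3 * β ^ 16) := by gcongr
        _ = _ := by ring
    calc (2 : ℝ) ^ (t + 1) * (256 * d / β ^ 2 * n / (ℓ ^ 2 * k ^ 2))
        ≤ 2 * (4 * ℓ * lg) * (256 * d / β ^ 2 * n / (ℓ ^ 2 * k ^ 2)) := by gcongr
      _ = 2 ^ 11 * 3072 * (lg ^ 2 * n) / (β ^ 4 * (ℓ * k ^ 2)) := by
          rw [hd]
          field_simp
          ring
      _ ≤ (β ^ 2 / 512) ^ 2 := by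
          rw [div_le_iff₀ (by positivity)]
          calc 2 ^ 11 * 3072 * (lg ^ 2 * n) = 2 ^ 29 * 3072 * (lg ^ 2 * n) / 2 ^ 18 := by ring
            _ ≤ β ^ 8 * (ℓ * k ^ 2) / 2 ^ 18 := by gcongr
            _ = _ := by ring

/-! ### From normal decoders to correlated matchings -/

theorem sum_pmo_mul_prod_eq {k : ℕ} {V : Type*} (y : (Fin k → Bool) → V → Bool) (i : Fin k)
    (C : Finset V) :
    ∑ b : Fin k → Bool, pmo (b i) * ∏ v ∈ C, pmo (y b v) =
      2 * ((Finset.univ.filter (fun b : Fin k → Bool =>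
        pmo (b i) = ∏ v ∈ C, pmo (y b v))).card : ℝ) - 2 ^ k := by
  have h : ∀ b : Fin k → Bool, pmo (b i) * ∏ v ∈ C, pmo (y b v) =
      2 * (if pmo (b i) = ∏ v ∈ C, pmo (y b v) then 1 else 0) - 1 := by
    intro b
    have habs : |∏ v ∈ C, pmo (y b v)| = 1 := by
      rw [Finset.abs_prod]
      exact Finset.prod_eq_one fun v _ => abs_pmo _
    rcases eq_or_eq_neg_of_abs_eq habs with hp | hp <;> rw [hp] <;>
      cases b i <;> norm_num [pmo]
  simp_rw [h]
  rw [Finset.sum_sub_distrib, ← Finset.mul_sum, Finset.sum_boole]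
  simp

theorem ne_of_card_insert_insert_eq_three {V : Type*} [DecidableEq V] {u v w : V}
    (h : ({u, v, w} : Finset V).card = 3) : u ≠ v ∧ u ≠ w ∧ v ≠ w := by
  have h2 : ∀ a b : V, ({a, b} : Finset V).card ≠ 3 := fun a b hab => by
    have := Finset.card_le_two (a := a) (b := b)
    omega
  refine ⟨?_, ?_, ?_⟩ <;> rintro rfl
  · exact h2 u w (by simpa using h)
  · exact h2 v u (by simpa [Finset.insert_comm u v] using h)
  · exact h2 u v (by simpa using h)

theorem IsMatching.sum_pairs_le {n : ℕ} {H : Finset (Finset (Fin n))} (hH : IsMatching 3 H)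
    (u : Fin n) :
    ∑ v, ∑ w, (if ({u, v, w} : Finset (Fin n)) ∈ H then (1 / 2 : ℝ) else 0) ≤ 1 := by
  have hcard : (univ.filter fun p : Fin n × Fin n =>
      ({u, p.1, p.2} : Finset (Fin n)) ∈ H).card ≤ 2 := by
    by_cases hex : ∃ p : Fin n × Fin n, ({u, p.1, p.2} : Finset (Fin n)) ∈ H
    · obtain ⟨⟨a, b⟩, hab⟩ := hex
      refine (Finset.card_le_card (t := {(a, b), (b, a)}) ?_).trans Finset.card_le_two
      rintro ⟨v, w⟩ hvw
      simp only [Finset.mem_filter, Finset.mem_univ, true_and] at hvw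
      have heq : ({u, v, w} : Finset (Fin n)) = {u, a, b} := by
        by_contra hne
        exact Finset.disjoint_left.1 (hH.2 hvw hab hne) (Finset.mem_insert_self u {v, w})
          (Finset.mem_insert_self u {a, b})
      obtain ⟨huv, huw, hvw'⟩ := ne_of_card_insert_insert_eq_three (hH.1 _ hvw)
      have hv : v ∈ ({u, a, b} : Finset (Fin n)) := by simp [← heq]
      have hw : w ∈ ({u, a, b} : Finset (Fin n)) := by simp [← heq]
      simp only [Finset.mem_insert, Finset.mem_singleton, Prod.mk.injEq] at hv hw ⊢
      grind
    · push Not at hex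
      rw [Finset.filter_false_of_mem (fun p _ => hex p)]
      simp
  rw [← Fintype.sum_prod_type' (f := fun v w =>
    if ({u, v, w} : Finset (Fin n)) ∈ H then (1 / 2 : ℝ) else 0), ← Finset.sum_filter]
  simp only [Finset.sum_const, nsmul_eq_mul]
  have : ((univ.filter fun p : Fin n × Fin n =>
      ({u, p.1, p.2} : Finset (Fin n)) ∈ H).card : ℝ) ≤ 2 := by exact_mod_cast hcard
  linarith

/-- **Main Theorem**: near-cubic lower bound for `3`-query locally decodable codes, in
normal form: if `Enc : {-1,1}^k → {-1,1}^n` is `(3, δ, ε)`-normally decodable, then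
`k³ ≤ c · n · (log n)⁶ / (ε¹⁶ δ¹⁶)` for an absolute constant `c > 0`. -/
theorem three_ldc_cubic_lower_bound :
    ∃ c : ℝ, 0 < c ∧
      ∀ (k n : ℕ) (δ ε : ℝ) (Enc : (Fin k → Bool) → Fin n → Bool),
        0 < k → 2 ≤ n → 0 < δ → 0 < ε →
        NormallyDecodable 3 k n δ ε Enc →
        (k : ℝ) ^ 3 ≤ c * n * Real.log n ^ 6 / (ε ^ 16 * δ ^ 16) := by
  refine ⟨(2 ^ 30 * 3072) ^ 2, by positivity, ?_⟩
  rintro k n δ ε Enc hk hn hδ hε ⟨H, hmatch, hsize, hdec⟩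
  rw [← mul_pow]
  have hcorr : ∀ i u v w, ({u, v, w} : Finset (Fin n)) ∈ H i → 2 * ε * 2 ^ k ≤
      ∑ b : Fin k → Bool, pmo (b i) * (pmo (Enc b u) * pmo (Enc b v) * pmo (Enc b w)) := by
    intro i u v w hmem
    have hprod : ∀ b, ∏ z ∈ ({u, v, w} : Finset (Fin n)), pmo (Enc b z) =
        pmo (Enc b u) * pmo (Enc b v) * pmo (Enc b w) := by
      obtain ⟨huv, huw, hvw⟩ := ne_of_card_insert_insert_eq_three ((hmatch i).1 _ hmem)
      intro b
      rw [Finset.prod_insert (by simp [huv, huw]), Finset.prod_pair hvw, mul_assoc]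
    have hp := hdec i _ hmem
    rw [le_div_iff₀ (by positivity)] at hp
    simp_rw [← hprod]
    rw [sum_pmo_mul_prod_eq]
    linarith
  refine cube_le_of_correlation hn hk
    (fun i u v w => if ({u, v, w} : Finset (Fin n)) ∈ H i then 1 / 2 else 0)
    (fun i u v w => by split_ifs <;> norm_num)
    (fun i u v w => by simp only [Finset.insert_comm u v])
    (fun i u v w => by simp only [Finset.pair_comm v w])
    (fun i u => (hmatch i).sum_pairs_le u)
    (fun b v => pmo (Enc b v)) (fun b v => abs_pmo _) (β := ε * δ) (by positivity) ?_
  rw [Finset.sum_comm]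
  have hi : ∀ i, ε * 2 ^ k * (δ * n) ≤ ∑ b : Fin k → Bool, pmo (b i) * ∑ u, ∑ v, ∑ w,
      (if ({u, v, w} : Finset (Fin n)) ∈ H i then (1 / 2 : ℝ) else 0) *
        pmo (Enc b u) * pmo (Enc b v) * pmo (Enc b w) := by
    intro i
    set S := univ.filter fun p : Fin n × Fin n × Fin n =>
      ({p.1, p.2.1, p.2.2} : Finset (Fin n)) ∈ H i with hS
    have hcard : (H i).card ≤ S.card := by
      refine Finset.card_le_card_of_surjOn
        (fun p => ({p.1, p.2.1, p.2.2} : Finset (Fin n))) fun C hC => ?_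
      obtain ⟨u, v, w, -, -, -, rfl⟩ := Finset.card_eq_three.1 ((hmatch i).1 C hC)
      exact ⟨(u, v, w), by simpa [hS] using hC, rfl⟩
    have hcard' : δ * n ≤ S.card := (hsize i).trans (by exact_mod_cast hcard)
    calc ε * 2 ^ k * (δ * n) ≤ ε * 2 ^ k * S.card := by gcongr
      _ = ∑ p ∈ S, ε * 2 ^ k := by simp [mul_comm]
      _ ≤ ∑ p ∈ S, 1 / 2 * ∑ b : Fin k → Bool, pmo (b i) *
            (pmo (Enc b p.1) * pmo (Enc b p.2.1) * pmo (Enc b p.2.2)) := by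
          refine Finset.sum_le_sum fun p hp => ?_
          have := hcorr i p.1 p.2.1 p.2.2 (by simpa [hS] using hp)
          linarith
      _ = _ := by
          rw [hS, Finset.sum_filter]
          have e : ∀ b : Fin k → Bool, ∑ u, ∑ v, ∑ w,
              (if ({u, v, w} : Finset (Fin n)) ∈ H i then (1 / 2 : ℝ) else 0) *
                pmo (Enc b u) * pmo (Enc b v) * pmo (Enc b w) =
              ∑ p : Fin n × Fin n × Fin n,
              (if ({p.1, p.2.1, p.2.2} : Finset (Fin n)) ∈ H i then (1 / 2 : ℝ) else 0) *
                pmo (Enc b p.1) * pmo (Enc b p.2.1) * pmo (Enc b p.2.2) := fun b => by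
            simp only [Fintype.sum_prod_type]
          simp_rw [e, Finset.mul_sum]
          rw [Finset.sum_comm (s := univ (α := Fin k → Bool))]
          refine Finset.sum_congr rfl fun p _ => ?_
          split_ifs
          · exact Finset.sum_congr rfl fun b _ => by ring
          · simp
  calc ε * δ * (n * k * 2 ^ k) = ∑ i : Fin k, ε * 2 ^ k * (δ * n) := by
        simp
        ring
    _ ≤ _ := Finset.sum_le_sum fun i _ => hi i
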